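/- Let μ be a composition of n, let ν = μ* be the composition with the same nonzero parts taken in the opposite order, and let d be the longest element of D_{μ,ν}. Then for every left H_ν-module M there is a natural isomorphism of H_n-modules Hom_{H_μ}(H_n, ^dM) ≅ H_n ⊗_{H_ν} M. -/

import Mathlib

set_option maxHeartbeats 1000000

namespace HC

/-- Generators of the affine Hecke–Clifford superalgebra `H_n`. -/
inductive Gen (n : ℕ) : Type
  | X : Fin n → Gen n
  | Xinv : Fin n → Gen n
  | C : Fin n → Gen n
  | T : Fin (n - 1) → Gen n

/-- The node `i` of `Fin n`, for `i : Fin (n-1)` (1-based: the node `i`). -/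
def lo {n : ℕ} (i : Fin (n - 1)) : Fin n :=
  ⟨i.val, by have := i.isLt; omega⟩

/-- The node `i+1` of `Fin n`, for `i : Fin (n-1)`. -/
def hi {n : ℕ} (i : Fin (n - 1)) : Fin n :=
  ⟨i.val + 1, by have := i.isLt; omega⟩

variable (F : Type) [Field F]

/-- The free algebra on the generators. -/
abbrev FA (n : ℕ) : Type := FreeAlgebra F (Gen n)

noncomputable def fx {n : ℕ} (i : Fin n) : FA F n := FreeAlgebra.ι F (Gen.X i)
noncomputable def fxinv {n : ℕ} (i : Fin n) : FA F n := FreeAlgebra.ι F (Gen.Xinv i)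
noncomputable def fc {n : ℕ} (i : Fin n) : FA F n := FreeAlgebra.ι F (Gen.C i)
noncomputable def ft {n : ℕ} (i : Fin (n - 1)) : FA F n := FreeAlgebra.ι F (Gen.T i)

/-- The defining relations of the affine Hecke–Clifford superalgebra, with parameter
`q` and `ξ = q - q⁻¹`. -/
inductive Rel (q : F) (n : ℕ) : FA F n → FA F n → Prop
  | XXinv (i : Fin n) : Rel q n (fx F i * fxinv F i) 1
  | XinvX (i : Fin n) : Rel q n (fxinv F i * fx F i) 1
  | XX (i j : Fin n) : Rel q n (fx F i * fx F j) (fx F j * fx F i)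
  | XiXi (i j : Fin n) : Rel q n (fxinv F i * fxinv F j) (fxinv F j * fxinv F i)
  | XXi (i j : Fin n) (h : i ≠ j) : Rel q n (fx F i * fxinv F j) (fxinv F j * fx F i)
  | CC (i : Fin n) : Rel q n (fc F i * fc F i) 1
  | Canti (i j : Fin n) (h : i ≠ j) : Rel q n (fc F i * fc F j) (-(fc F j * fc F i))
  | CX (i : Fin n) : Rel q n (fc F i * fx F i) (fxinv F i * fc F i)
  | CXi (i : Fin n) : Rel q n (fc F i * fxinv F i) (fx F i * fc F i)
  | CXo (i j : Fin n) (h : i ≠ j) : Rel q n (fc F i * fx F j) (fx F j * fc F i)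
  | CXio (i j : Fin n) (h : i ≠ j) : Rel q n (fc F i * fxinv F j) (fxinv F j * fc F i)
  | Tquad (i : Fin (n - 1)) : Rel q n (ft F i * ft F i) ((q - q⁻¹) • ft F i + 1)
  | Tbraid (i j : Fin (n - 1)) (h : (j : ℕ) = (i : ℕ) + 1) :
      Rel q n (ft F i * ft F j * ft F i) (ft F j * ft F i * ft F j)
  | TTfar (i j : Fin (n - 1)) (h : (i : ℕ) + 1 < (j : ℕ)) :
      Rel q n (ft F i * ft F j) (ft F j * ft F i)
  | TC (i : Fin (n - 1)) : Rel q n (ft F i * fc F (lo i)) (fc F (hi i) * ft F i)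
  | TCo (i : Fin (n - 1)) (j : Fin n) (h1 : j ≠ lo i) (h2 : j ≠ hi i) :
      Rel q n (ft F i * fc F j) (fc F j * ft F i)
  | TXo (i : Fin (n - 1)) (j : Fin n) (h1 : j ≠ lo i) (h2 : j ≠ hi i) :
      Rel q n (ft F i * fx F j) (fx F j * ft F i)
  | TXio (i : Fin (n - 1)) (j : Fin n) (h1 : j ≠ lo i) (h2 : j ≠ hi i) :
      Rel q n (ft F i * fxinv F j) (fxinv F j * ft F i)
  | cross (i : Fin (n - 1)) :
      Rel q n ((ft F i + (q - q⁻¹) • (fc F (lo i) * fc F (hi i))) * fx F (lo i) * ft F i)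
        (fx F (hi i))

/-- The affine Hecke–Clifford superalgebra `H_n` over `F` with parameter `q`. -/
abbrev H (q : F) (n : ℕ) : Type := RingQuot (Rel F q n)

noncomputable def X (q : F) {n : ℕ} (i : Fin n) : H F q n :=
  RingQuot.mkAlgHom F (Rel F q n) (fx F i)

noncomputable def Xinv (q : F) {n : ℕ} (i : Fin n) : H F q n :=
  RingQuot.mkAlgHom F (Rel F q n) (fxinv F i)

noncomputable def C (q : F) {n : ℕ} (i : Fin n) : H F q n :=
  RingQuot.mkAlgHom F (Rel F q n) (fc F i)

noncomputable def T (q : F) {n : ℕ} (i : Fin (n - 1)) : H F q n :=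
  RingQuot.mkAlgHom F (Rel F q n) (ft F i)

/-- `q` is either a primitive root of unity of odd order (including `q = 1`)
or not a root of unity at all (and `q ≠ 0`). -/
def GoodParam (q : F) : Prop :=
  q ≠ 0 ∧ ((∃ m : ℕ, Odd m ∧ IsPrimitiveRoot q m) ∨ ∀ m : ℕ, 0 < m → q ^ m ≠ 1)

/-- `X_i^a` for an integer exponent `a ∈ ℤ`. -/
noncomputable def XZ (q : F) {n : ℕ} (i : Fin n) (a : ℤ) : H F q n :=
  if 0 ≤ a then X F q i ^ a.toNat else Xinv F q i ^ (-a).toNat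

/-- The monomial `X^α = X_1^{α_1} ⋯ X_n^{α_n}` for `α ∈ ℤ^n`. -/
noncomputable def Xmon (q : F) {n : ℕ} (α : Fin n → ℤ) : H F q n :=
  ((List.finRange n).map fun i => XZ F q i (α i)).prod

/-- The monomial `C^β = C_1^{β_1} ⋯ C_n^{β_n}` for `β ∈ {0,1}^n`. -/
noncomputable def Cmon (q : F) {n : ℕ} (β : Fin n → Bool) : H F q n :=
  ((List.finRange n).map fun i => if β i then C F q i else 1).prod

/-- The basic transposition `s_i = (i, i+1)` of `S_n`. -/
def s {n : ℕ} (i : Fin (n - 1)) : Equiv.Perm (Fin n) := Equiv.swap (lo i) (hi i)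

/-- The Coxeter length (number of inversions) of a permutation of `Fin n`. -/
def len {n : ℕ} (w : Equiv.Perm (Fin n)) : ℕ :=
  ((Finset.univ : Finset (Fin n × Fin n)).filter fun p => p.1 < p.2 ∧ w p.2 < w p.1).card

/-- `Tw` is the family of standard basis elements `T_w`, `w ∈ S_n`: it satisfies
`T_1 = 1`, `T_{s_i} = T_i`, and `T_{s_i w} = T_i T_w` whenever `ℓ(s_i w) = ℓ(w) + 1`.
These conditions determine the family uniquely. -/
def IsTFam (q : F) {n : ℕ} (Tw : Equiv.Perm (Fin n) → H F q n) : Prop :=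
  Tw 1 = 1 ∧ (∀ i : Fin (n - 1), Tw (s i) = T F q i) ∧
    ∀ (i : Fin (n - 1)) (w : Equiv.Perm (Fin n)),
      len (s i * w) = len w + 1 → Tw (s i * w) = T F q i * Tw w

/-- `h` is the quantum characteristic of `q`:  the smallest positive integer with
`q^{1-h} + q^{3-h} + ⋯ + q^{h-1} = 0`. -/
def qcharEq (q : F) (h : ℕ) : Prop :=
  0 < h ∧ (∑ k ∈ Finset.range h, q ^ (1 - (h : ℤ) + 2 * (k : ℤ))) = 0 ∧
    ∀ h' : ℕ, 0 < h' → h' < h →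
      (∑ k ∈ Finset.range h', q ^ (1 - (h' : ℤ) + 2 * (k : ℤ))) ≠ 0

/-- `i ∈ I = {0, 1, …, ℓ}` where `ℓ = (h-1)/2` (no condition if the quantum
characteristic is infinite). -/
def memI (q : F) (i : ℕ) : Prop := ∀ h : ℕ, qcharEq F q h → 2 * i + 1 ≤ h

/-- `q(i) = 2(q^{2i+1} + q^{-2i-1})/(q + q⁻¹)`. -/
noncomputable def qres (q : F) (i : ℕ) : F :=
  2 * (q ^ (2 * i + 1) + q⁻¹ ^ (2 * i + 1)) / (q + q⁻¹)

/-- Index of the block containing position `k` (0-based), for a composition given as a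
list of parts. -/
def blk : List ℕ → ℕ → ℕ
  | [], _ => 0
  | a :: rest, k => if k < a then 0 else blk rest (k - a) + 1

/-- Membership in the Young subgroup `S_μ ⊆ S_n`. -/
def InYoung {n : ℕ} (μ : List ℕ) (w : Equiv.Perm (Fin n)) : Prop :=
  ∀ k : Fin n, blk μ (w k).val = blk μ k.val

/-- `μ` is a composition of `n`. -/
def IsComposition (μ : List ℕ) (n : ℕ) : Prop := (∀ a ∈ μ, 0 < a) ∧ μ.sum = n

/-- The parabolic subalgebra generated by all `X_i^{±1}`, `C_i`, and the `T_j` with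
`j` in a set `J` of admissible indices. -/
def parabolicJ (q : F) {n : ℕ} (J : Set (Fin (n - 1))) : Subalgebra F (H F q n) :=
  Algebra.adjoin F
    ((Set.range fun i : Fin n => X F q i) ∪ (Set.range fun i : Fin n => Xinv F q i) ∪
      (Set.range fun i : Fin n => C F q i) ∪ {h | ∃ j ∈ J, h = T F q j})

/-- The parabolic subalgebra `H_μ` for a composition `μ`. -/
def parabolicC (q : F) {n : ℕ} (μ : List ℕ) : Subalgebra F (H F q n) :=
  parabolicJ F q {j | InYoung μ (s j)}

/-- The classical parabolic subalgebra `H^cl_μ`, generated by the `T_j` with `s_j ∈ S_μ`. -/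
def clparC (q : F) {n : ℕ} (μ : List ℕ) : Subalgebra F (H F q n) :=
  Algebra.adjoin F {h | ∃ j : Fin (n - 1), InYoung μ (s j) ∧ h = T F q j}

/-- The finite Hecke–Clifford subalgebra `H^fn_n`, generated by all `C_i` and `T_j`. -/
def Hfin (q : F) (n : ℕ) : Subalgebra F (H F q n) :=
  Algebra.adjoin F
    ((Set.range fun i : Fin n => C F q i) ∪ {h | ∃ j : Fin (n - 1), h = T F q j})

/-- `x` is a minimal length `(S_μ, S_ν)`-double coset representative. -/
def IsMinDC {n : ℕ} (μ ν : List ℕ) (x : Equiv.Perm (Fin n)) : Prop :=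
  ∀ u v : Equiv.Perm (Fin n), InYoung μ u → InYoung ν v → len x ≤ len (u * x * v)

/-- `w ∈ S_μ x S_ν`. -/
def InDC {n : ℕ} (μ ν : List ℕ) (x w : Equiv.Perm (Fin n)) : Prop :=
  ∃ u v : Equiv.Perm (Fin n), InYoung μ u ∧ InYoung ν v ∧ w = u * x * v

/-- A covering step in the Bruhat order: multiplication by a reflection increasing length. -/
def BruhatStep {n : ℕ} (v w : Equiv.Perm (Fin n)) : Prop :=
  ∃ a b : Fin n, a ≠ b ∧ w = Equiv.swap a b * v ∧ len v < len w

/-- The Bruhat order on `S_n`. -/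
def BruhatLE {n : ℕ} : Equiv.Perm (Fin n) → Equiv.Perm (Fin n) → Prop :=
  Relation.ReflTransGen BruhatStep

/-- The space of `A`-equivariant linear maps between two representations of the
`F`-algebra `A`. -/
def eqvHoms {A : Type} [Ring A] [Algebra F A] {M N : Type}
    [AddCommGroup M] [Module F M] [AddCommGroup N] [Module F N]
    (ρM : A →ₐ[F] Module.End F M) (ρN : A →ₐ[F] Module.End F N) :
    Submodule F (M →ₗ[F] N) where
  carrier := {f | ∀ (x : A) (m : M), f (ρM x m) = ρN x (f m)}
  add_mem' := by
    intro f g hf hg x m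
    simp only [LinearMap.add_apply, hf x m, hg x m, map_add]
  zero_mem' := by
    intro x m
    simp only [LinearMap.zero_apply, map_zero]
  smul_mem' := by
    intro c f hf x m
    simp only [LinearMap.smul_apply, hf x m, map_smul]

/-- `(E, ρE, ι)` is the module induced along the algebra morphism `φ : B →ₐ A` from
the `B`-representation `(M, ρ)`, i.e. `E = A ⊗_B M`, characterized by its universal
property. -/
def IsInducedAlong {A B : Type} [Ring A] [Ring B] [Algebra F A] [Algebra F B]
    (φ : B →ₐ[F] A) {M : Type} [AddCommGroup M] [Module F M]
    (ρ : B →ₐ[F] Module.End F M) {E : Type} [AddCommGroup E] [Module F E]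
    (ρE : A →ₐ[F] Module.End F E) (ι : M →ₗ[F] E) : Prop :=
  (∀ (b : B) (m : M), ι (ρ b m) = ρE (φ b) (ι m)) ∧
    ∀ (P : Type) [AddCommGroup P] [Module F P],
      ∀ (ρP : A →ₐ[F] Module.End F P) (f : M →ₗ[F] P),
        (∀ (b : B) (m : M), f (ρ b m) = ρP (φ b) (f m)) →
        ∃! g : E →ₗ[F] P,
          (∀ (x : A) (e : E), g (ρE x e) = ρP x (g e)) ∧ ∀ m : M, g (ι m) = f m

/-- `δ` is the grading automorphism of the superalgebra `H_n`
(identity on even generators, `-1` on the odd generators `C_i`). -/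
def IsGradingAut (q : F) {n : ℕ} (δ : H F q n →ₐ[F] H F q n) : Prop :=
  (∀ i : Fin n, δ (X F q i) = X F q i) ∧ (∀ i : Fin n, δ (Xinv F q i) = Xinv F q i) ∧
    (∀ i : Fin n, δ (C F q i) = -C F q i) ∧ ∀ i : Fin (n - 1), δ (T F q i) = T F q i

/-- `τ` is the antiautomorphism of `H_n` with `τ(T_i) = T_i + ξ C_i C_{i+1}`,
`τ(C_j) = C_j`, `τ(X_j) = X_j`. -/
def IsTauAntiAut (q : F) {n : ℕ} (τ : H F q n →ₗ[F] H F q n) : Prop :=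
  Function.Bijective τ ∧ (∀ a b : H F q n, τ (a * b) = τ b * τ a) ∧ τ 1 = 1 ∧
    (∀ i : Fin (n - 1),
      τ (T F q i) = T F q i + (q - q⁻¹) • (C F q (lo i) * C F q (hi i))) ∧
    (∀ j : Fin n, τ (C F q j) = C F q j) ∧ (∀ j : Fin n, τ (X F q j) = X F q j) ∧
    ∀ j : Fin n, τ (Xinv F q j) = Xinv F q j

/-- `ρ'` is the representation of the subalgebra `B` obtained from the
`H_ν`-representation `ρν` by twisting with the isomorphism `φ_{x⁻¹}`
(determined by `X_i ↦ X_{x⁻¹ i}`, `C_i ↦ C_{x⁻¹ i}`, `T_w ↦ T_{x⁻¹ w x}`). -/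
def IsTwistedRep (q : F) {n : ℕ} (ν : List ℕ) (x : Equiv.Perm (Fin n))
    (B : Subalgebra F (H F q n)) {M : Type} [AddCommGroup M] [Module F M]
    (ρν : ↥(parabolicC F q (n := n) ν) →ₐ[F] Module.End F M)
    (ρ' : ↥B →ₐ[F] Module.End F M) : Prop :=
  (∀ (i : Fin n) (a : ↥B) (b : ↥(parabolicC F q (n := n) ν)),
      (a : H F q n) = X F q i → (b : H F q n) = X F q (x⁻¹ i) → ρ' a = ρν b) ∧
  (∀ (i : Fin n) (a : ↥B) (b : ↥(parabolicC F q (n := n) ν)),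
      (a : H F q n) = Xinv F q i → (b : H F q n) = Xinv F q (x⁻¹ i) → ρ' a = ρν b) ∧
  (∀ (i : Fin n) (a : ↥B) (b : ↥(parabolicC F q (n := n) ν)),
      (a : H F q n) = C F q i → (b : H F q n) = C F q (x⁻¹ i) → ρ' a = ρν b) ∧
  ∀ (j j' : Fin (n - 1)) (a : ↥B) (b : ↥(parabolicC F q (n := n) ν)),
      lo j' = x⁻¹ (lo j) → (a : H F q n) = T F q j → (b : H F q n) = T F q j' → ρ' a = ρν b

/-- The element `f = a_d X_1^d + ⋯ + a_1 X_1 + a_0` of `H_n`. -/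
noncomputable def felem (q : F) (n d : ℕ) (aa : ℕ → F) : H F q n :=
  if h : 0 < n then ∑ i ∈ Finset.range (d + 1), aa i • X F q (⟨0, h⟩ : Fin n) ^ i else 0

/-- The conditions on the coefficients of `f`: degree `d ≥ 1`, monic, and
`a_i = a_0 a_{d-i}`. -/
def GoodPoly (d : ℕ) (aa : ℕ → F) : Prop :=
  1 ≤ d ∧ aa d = 1 ∧ (∀ i ≤ d, aa i = aa 0 * aa (d - i)) ∧ ∀ i : ℕ, d < i → aa i = 0

/-- The relation generating the two-sided ideal `I_f` of `H_n`. -/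
inductive CycRel (q : F) (n d : ℕ) (aa : ℕ → F) : H F q n → H F q n → Prop
  | rel : CycRel q n d aa (felem F q n d aa) 0

/-- The cyclotomic Hecke–Clifford superalgebra `H_n^f = H_n / I_f`. -/
abbrev Hf (q : F) (n d : ℕ) (aa : ℕ → F) : Type := RingQuot (CycRel F q n d aa)

/-- The canonical quotient map `H_n → H_n^f`. -/
noncomputable def cyc (q : F) (n d : ℕ) (aa : ℕ → F) : H F q n →ₐ[F] Hf F q n d aa :=
  RingQuot.mkAlgHom F (CycRel F q n d aa)

noncomputable def Xf (q : F) (n d : ℕ) (aa : ℕ → F) (i : Fin n) : Hf F q n d aa :=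
  cyc F q n d aa (X F q i)
noncomputable def Xinvf (q : F) (n d : ℕ) (aa : ℕ → F) (i : Fin n) : Hf F q n d aa :=
  cyc F q n d aa (Xinv F q i)
noncomputable def Cf (q : F) (n d : ℕ) (aa : ℕ → F) (i : Fin n) : Hf F q n d aa :=
  cyc F q n d aa (C F q i)
noncomputable def Tf (q : F) (n d : ℕ) (aa : ℕ → F) (i : Fin (n - 1)) : Hf F q n d aa :=
  cyc F q n d aa (T F q i)

/-- `e` is the canonical embedding `H_k^f → H_N^f` (shifting all indices by `sh`;
for `sh = 0` this is the standard identification of `H_k^f` with a subalgebra of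
`H_N^f`). -/
def IsCycEmb (q : F) (k N d : ℕ) (aa : ℕ → F) (sh : ℕ)
    (e : Hf F q k d aa →ₐ[F] Hf F q N d aa) : Prop :=
  (∀ (i : Fin k) (i' : Fin N), (i' : ℕ) = sh + (i : ℕ) →
      e (Xf F q k d aa i) = Xf F q N d aa i') ∧
  (∀ (i : Fin k) (i' : Fin N), (i' : ℕ) = sh + (i : ℕ) →
      e (Xinvf F q k d aa i) = Xinvf F q N d aa i') ∧
  (∀ (i : Fin k) (i' : Fin N), (i' : ℕ) = sh + (i : ℕ) →
      e (Cf F q k d aa i) = Cf F q N d aa i') ∧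
  ∀ (j : Fin (k - 1)) (j' : Fin (N - 1)), (j' : ℕ) = sh + (j : ℕ) →
      e (Tf F q k d aa j) = Tf F q N d aa j'

/-- `δ` is the grading automorphism of the superalgebra `H_n^f`. -/
def IsCycGrading (q : F) (n d : ℕ) (aa : ℕ → F)
    (δ : Hf F q n d aa →ₐ[F] Hf F q n d aa) : Prop :=
  (∀ i : Fin n, δ (Xf F q n d aa i) = Xf F q n d aa i) ∧
  (∀ i : Fin n, δ (Xinvf F q n d aa i) = Xinvf F q n d aa i) ∧
  (∀ i : Fin n, δ (Cf F q n d aa i) = -Cf F q n d aa i) ∧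
  ∀ j : Fin (n - 1), δ (Tf F q n d aa j) = Tf F q n d aa j

/-- The elements `f_1 = f`, `f_{i+1} = (T_i + ξ C_i C_{i+1}) f_i T_i` of `H_n`
(0-based indexing: `fseq k = f_{k+1}`). -/
noncomputable def fseq (q : F) (n d : ℕ) (aa : ℕ → F) : ℕ → H F q n
  | 0 => felem F q n d aa
  | k + 1 =>
    if h : k < n - 1 then
      (T F q (⟨k, h⟩ : Fin (n - 1)) +
          (q - q⁻¹) • (C F q (lo (⟨k, h⟩ : Fin (n - 1))) *
            C F q (hi (⟨k, h⟩ : Fin (n - 1))))) *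
        fseq q n d aa k * T F q (⟨k, h⟩ : Fin (n - 1))
    else 0

/-- `f_Z = f_{z_1} ⋯ f_{z_u}` for `Z = {z_1 < ⋯ < z_u} ⊆ {1,…,n}` (0-based). -/
noncomputable def fZ (q : F) (n d : ℕ) (aa : ℕ → F) (Z : Finset (Fin n)) : H F q n :=
  ((Z.sort (· ≤ ·)).map fun z => fseq F q n d aa (z : ℕ)).prod

/-- The coinduced module `Hom_{H_B}(H_n, M)` for a subalgebra `B ⊆ H_n` and a
`B`-representation `(M, ρ)`: linear maps `ψ : H_n → M` with `ψ(b x) = b · ψ(x)` for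
`b ∈ B`; `H_n` acts by right translation. -/
def coindPar (F : Type) [Field F] (q : F) {n : ℕ} (B : Subalgebra F (H F q n))
    {M : Type} [AddCommGroup M] [Module F M] (ρ : ↥B →ₐ[F] Module.End F M) :
    Submodule F (H F q n →ₗ[F] M) where
  carrier := {ψ | ∀ (b : ↥B) (x : H F q n), ψ ((b : H F q n) * x) = ρ b (ψ x)}
  add_mem' := by
    intro f g hf hg b x
    simp only [LinearMap.add_apply, hf b x, hg b x, map_add]
  zero_mem' := by intro b x; simp only [LinearMap.zero_apply, map_zero]
  smul_mem' := by
    intro cc f hf b x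
    simp only [LinearMap.smul_apply, hf b x, map_smul]

end HC

namespace HC

section Combinatorics

variable {n : ℕ}

theorem lo_val (i : Fin (n - 1)) : (lo i).val = i.val := rfl

theorem hi_val (i : Fin (n - 1)) : (hi i).val = i.val + 1 := rfl

theorem lo_lt_hi (i : Fin (n - 1)) : lo i < hi i := by
  rw [Fin.lt_def, lo_val, hi_val]; omega

theorem lo_ne_hi (i : Fin (n - 1)) : lo i ≠ hi i := (lo_lt_hi i).ne

@[simp] theorem s_lo (i : Fin (n - 1)) : s i (lo i) = hi i := Equiv.swap_apply_left _ _

@[simp] theorem s_hi (i : Fin (n - 1)) : s i (hi i) = lo i := Equiv.swap_apply_right _ _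

theorem s_other (i : Fin (n - 1)) {k : Fin n} (h1 : k ≠ lo i) (h2 : k ≠ hi i) : s i k = k :=
  Equiv.swap_apply_of_ne_of_ne h1 h2

@[simp] theorem s_mul_self (i : Fin (n - 1)) : s i * s i = 1 := Equiv.swap_mul_self _ _

@[simp] theorem s_inv (i : Fin (n - 1)) : (s i)⁻¹ = s i := Equiv.swap_inv _ _

@[simp] theorem s_mul_s_mul (i : Fin (n - 1)) (w : Equiv.Perm (Fin n)) :
    s i * (s i * w) = w := by rw [← mul_assoc, s_mul_self, one_mul]

@[simp] theorem mul_s_mul_s (i : Fin (n - 1)) (w : Equiv.Perm (Fin n)) :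
    w * s i * s i = w := by rw [mul_assoc, s_mul_self, mul_one]

theorem s_val (i : Fin (n - 1)) (k : Fin n) :
    (s i k).val = if k.val = i.val then i.val + 1 else if k.val = i.val + 1 then i.val
      else k.val := by
  by_cases h1 : k = lo i
  · subst h1; simp [lo_val, hi_val]
  · by_cases h2 : k = hi i
    · subst h2; simp [lo_val, hi_val]
    · rw [s_other i h1 h2]
      have h1' : k.val ≠ i.val := fun h => h1 (Fin.ext h)
      have h2' : k.val ≠ i.val + 1 := fun h => h2 (Fin.ext h)
      simp [h1', h2']

theorem s_lt_s_iff (i : Fin (n - 1)) {a b : Fin n} (h : ¬(a = lo i ∧ b = hi i))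
    (h' : ¬(a = hi i ∧ b = lo i)) : s i a < s i b ↔ a < b := by
  simp only [Fin.ext_iff, lo_val, hi_val] at h h'
  rw [Fin.lt_def, Fin.lt_def, s_val, s_val]
  split_ifs <;> omega

/-- `i` is a left descent of `w`, i.e. `s_i w` is shorter than `w`. -/
def DescL (i : Fin (n - 1)) (w : Equiv.Perm (Fin n)) : Prop := w⁻¹ (hi i) < w⁻¹ (lo i)

instance (i : Fin (n - 1)) (w : Equiv.Perm (Fin n)) : Decidable (DescL i w) :=
  inferInstanceAs (Decidable (_ < _))

theorem descL_s_mul (i j : Fin (n - 1)) (w : Equiv.Perm (Fin n)) :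
    DescL i (s j * w) ↔ w⁻¹ (s j (hi i)) < w⁻¹ (s j (lo i)) := by
  simp [DescL, mul_inv_rev]

theorem descL_s_mul_self (i : Fin (n - 1)) (w : Equiv.Perm (Fin n)) :
    DescL i (s i * w) ↔ ¬DescL i w := by
  rw [descL_s_mul, s_hi, s_lo, DescL, not_lt]
  exact ⟨le_of_lt, fun h => lt_of_le_of_ne h fun h' => lo_ne_hi i (w⁻¹.injective h')⟩

theorem not_descL_one (i : Fin (n - 1)) : ¬DescL i (1 : Equiv.Perm (Fin n)) := by
  simpa [DescL] using (lo_lt_hi i).le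

/-- The set of inversions of a permutation. -/
def invs (w : Equiv.Perm (Fin n)) : Finset (Fin n × Fin n) :=
  (Finset.univ : Finset (Fin n × Fin n)).filter fun p => p.1 < p.2 ∧ w p.2 < w p.1

theorem mem_invs {w : Equiv.Perm (Fin n)} {p : Fin n × Fin n} :
    p ∈ invs w ↔ p.1 < p.2 ∧ w p.2 < w p.1 := by simp [invs]

theorem len_eq_card (w : Equiv.Perm (Fin n)) : len w = (invs w).card := rfl

theorem len_inv (w : Equiv.Perm (Fin n)) : len w⁻¹ = len w := by
  rw [len_eq_card, len_eq_card]
  refine Finset.card_bij (fun p _ => (w⁻¹ p.2, w⁻¹ p.1)) ?_ ?_ ?_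
  · intro p hp
    rw [mem_invs] at hp ⊢
    simpa using hp.symm
  · intro p _ p' _ h
    simp only [Prod.mk.injEq, EmbeddingLike.apply_eq_iff_eq] at h
    exact Prod.ext h.2 h.1
  · intro p hp
    rw [mem_invs] at hp
    exact ⟨(w p.2, w p.1), by rw [mem_invs]; simpa using hp.symm, by simp⟩

theorem len_one : len (1 : Equiv.Perm (Fin n)) = 0 := by
  rw [len_eq_card, Finset.card_eq_zero, Finset.eq_empty_iff_forall_notMem]
  intro p hp
  rw [mem_invs] at hp
  exact lt_asymm hp.1 hp.2

theorem len_s_mul_of_not_descL {i : Fin (n - 1)} {w : Equiv.Perm (Fin n)} (h : ¬DescL i w) :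
    len (s i * w) = len w + 1 := by
  have hlt : w⁻¹ (lo i) < w⁻¹ (hi i) :=
    lt_of_le_of_ne (not_lt.mp h) fun h' => lo_ne_hi i (w⁻¹.injective h')
  have hins : invs (s i * w) = insert (w⁻¹ (lo i), w⁻¹ (hi i)) (invs w) := by
    ext ⟨a, b⟩
    rw [Finset.mem_insert, mem_invs, mem_invs]
    simp only [Equiv.Perm.coe_mul, Function.comp_apply, Prod.mk.injEq]
    by_cases h1 : w a = lo i ∧ w b = hi i
    · have ha : a = w⁻¹ (lo i) := by rw [← h1.1]; simp
      have hb : b = w⁻¹ (hi i) := by rw [← h1.2]; simp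
      subst ha hb
      simpa using ⟨hlt, lo_lt_hi i⟩
    · by_cases h2 : w a = hi i ∧ w b = lo i
      · have ha : a = w⁻¹ (hi i) := by rw [← h2.1]; simp
        have hb : b = w⁻¹ (lo i) := by rw [← h2.2]; simp
        subst ha hb
        refine iff_of_false (fun h => lt_asymm hlt h.1) ?_
        rintro (h | h)
        · exact lo_ne_hi i (w⁻¹.injective h.2)
        · exact lt_asymm hlt h.1
      · rw [s_lt_s_iff i (fun h => h2 ⟨h.2, h.1⟩) (fun h => h1 ⟨h.2, h.1⟩)]
        refine ⟨fun h => Or.inr h, fun h => h.resolve_left ?_⟩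
        rintro ⟨rfl, rfl⟩
        simp at h1
  rw [len_eq_card, len_eq_card, hins, Finset.card_insert_of_notMem]
  rw [mem_invs]
  simpa using fun _ => (lo_lt_hi i).le

theorem len_s_mul_of_descL {i : Fin (n - 1)} {w : Equiv.Perm (Fin n)} (h : DescL i w) :
    len (s i * w) + 1 = len w := by
  have := len_s_mul_of_not_descL (w := s i * w) (i := i) (by rw [descL_s_mul_self]; simpa using h)
  rw [s_mul_s_mul] at this
  exact this.symm

theorem len_s_mul_le (i : Fin (n - 1)) (w : Equiv.Perm (Fin n)) :
    len (s i * w) ≤ len w + 1 := by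
  by_cases h : DescL i w
  · have := len_s_mul_of_descL h; omega
  · exact (len_s_mul_of_not_descL h).le

/-- A function which increases along every step between consecutive elements of an interval
increases from its left end to its right end. -/
theorem lt_of_forall_step {f : Fin n → Fin n} {a b : Fin n} (hab : a < b)
    (h : ∀ i : Fin (n - 1), a ≤ lo i → hi i ≤ b → f (lo i) < f (hi i)) : f a < f b := by
  obtain ⟨k, hk⟩ : ∃ k, b.val = a.val + k + 1 := ⟨b.val - a.val - 1, by
    rw [Fin.lt_def] at hab; omega⟩
  induction k generalizing b with
  | zero =>
    have hb := b.isLt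
    have := h ⟨a.val, by omega⟩ (by rw [Fin.le_def]; rfl)
      (by rw [Fin.le_def, hi_val]; simp only; omega)
    have ea : lo (n := n) ⟨a.val, by omega⟩ = a := rfl
    have eb : hi (n := n) ⟨a.val, by omega⟩ = b := Fin.ext (by rw [hi_val]; simp only; omega)
    rwa [ea, eb] at this
  | succ k ih =>
    have hb := b.isLt
    set i : Fin (n - 1) := ⟨a.val + k + 1, by omega⟩ with hi_def
    have hiv : i.val = a.val + k + 1 := rfl
    have eb : hi i = b := Fin.ext (by rw [hi_val]; omega)
    refine lt_trans (ih (b := lo i) ?_ ?_ ?_) (eb ▸ h i ?_ eb.le)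
    · rw [Fin.lt_def, lo_val]; omega
    · intro j h1 h2
      refine h j h1 (h2.trans ?_)
      rw [Fin.le_def, lo_val]; omega
    · rw [lo_val]
    · rw [Fin.le_def, lo_val]; omega

theorem exists_descL {w : Equiv.Perm (Fin n)} (h : w ≠ 1) : ∃ i, DescL i w := by
  by_contra hc
  push Not at hc
  have hmono : StrictMono (fun a => w⁻¹ a) := fun a b hab => lt_of_forall_step hab fun i _ _ =>
    lt_of_le_of_ne (not_lt.mp (hc i)) fun h' => lo_ne_hi i (w⁻¹.injective h')
  have : w⁻¹ = 1 := by
    ext1 a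
    have := Subsingleton.elim (hmono.orderIsoOfSurjective _ w⁻¹.surjective) (OrderIso.refl _)
    exact congrArg (fun e : Fin n ≃o Fin n => e a) this
  exact h (inv_eq_one.mp this)

/-- Induction on a permutation, multiplying by simple reflections on the left. -/
theorem perm_induction_left {P : Equiv.Perm (Fin n) → Prop} (one : P 1)
    (step : ∀ (i : Fin (n - 1)) (w : Equiv.Perm (Fin n)), ¬DescL i w → P w → P (s i * w))
    (w : Equiv.Perm (Fin n)) : P w := by
  induction hk : len w using Nat.strong_induction_on generalizing w with
  | _ k ih =>
    by_cases hw : w = 1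
    · exact hw ▸ one
    · obtain ⟨i, hi⟩ := exists_descL hw
      have hlen := len_s_mul_of_descL hi
      have := step i (s i * w) (by rw [descL_s_mul_self]; simpa using hi)
        (ih _ (by omega) _ rfl)
      rwa [s_mul_s_mul] at this

/-- Left and right multiplication by simple reflections change descents only where they
agree. -/
theorem descL_inv_s_mul_iff (i j : Fin (n - 1)) (w : Equiv.Perm (Fin n))
    (h : s i * w ≠ w * s j) : DescL j (s i * w)⁻¹ ↔ DescL j w⁻¹ := by
  simp only [DescL, inv_inv, Equiv.Perm.coe_mul, Function.comp_apply]
  have key : ¬(w (hi j) = lo i ∧ w (lo j) = hi i) ∧ ¬(w (hi j) = hi i ∧ w (lo j) = lo i) := by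
    constructor
    · rintro ⟨h1, h2⟩
      apply h
      rw [s, s, Equiv.mul_swap_eq_swap_mul, h1, h2, Equiv.swap_comm]
    · rintro ⟨h1, h2⟩
      apply h
      rw [s, s, Equiv.mul_swap_eq_swap_mul, h1, h2]
  exact s_lt_s_iff i key.1 key.2

theorem descL_mul_s_iff (i j : Fin (n - 1)) (w : Equiv.Perm (Fin n))
    (h : s i * w ≠ w * s j) : DescL i (w * s j) ↔ DescL i w := by
  have := descL_inv_s_mul_iff j i w⁻¹ (fun h' => h (by
    have := congrArg (·⁻¹) h'
    simpa [mul_inv_rev] using this.symm))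
  rw [inv_inv] at this
  rw [← this, mul_inv_rev, inv_inv, s_inv]

theorem descL_inv_iff_of_comm (i j : Fin (n - 1)) (w : Equiv.Perm (Fin n))
    (h : s i * w = w * s j) : DescL j w⁻¹ ↔ DescL i w := by
  have h' : w⁻¹ * s i * w = s j := by rw [mul_assoc, h, inv_mul_cancel_left]
  have h'' : Equiv.swap (w⁻¹ (lo i)) (w⁻¹ (hi i)) = s j := by
    rw [← h']; simp [s, Equiv.mul_swap_eq_swap_mul, mul_assoc]
  have hne : w⁻¹ (lo i) ≠ w⁻¹ (hi i) := fun h0 => lo_ne_hi i (w⁻¹.injective h0)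
  have e1 : s j (w⁻¹ (lo i)) = w⁻¹ (hi i) := by rw [← h'', Equiv.swap_apply_left]
  have hcase : (w⁻¹ (lo i) = lo j ∧ w⁻¹ (hi i) = hi j) ∨
      (w⁻¹ (lo i) = hi j ∧ w⁻¹ (hi i) = lo j) := by
    by_cases h1 : w⁻¹ (lo i) = lo j
    · left; rw [h1, s_lo] at e1; exact ⟨h1, e1.symm⟩
    · by_cases h2 : w⁻¹ (lo i) = hi j
      · right; rw [h2, s_hi] at e1; exact ⟨h2, e1.symm⟩
      · rw [s_other j h1 h2] at e1; exact absurd e1 hne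
  simp only [DescL, inv_inv]
  rcases hcase with ⟨h1, h2⟩ | ⟨h1, h2⟩
  · rw [← Equiv.Perm.inv_eq_iff_eq.mp h1, ← Equiv.Perm.inv_eq_iff_eq.mp h2, h1, h2]
    exact iff_of_false (lo_lt_hi i).not_gt (lo_lt_hi j).not_gt
  · rw [← Equiv.Perm.inv_eq_iff_eq.mp h1, ← Equiv.Perm.inv_eq_iff_eq.mp h2, h1, h2]
    exact iff_of_true (lo_lt_hi i) (lo_lt_hi j)

end Combinatorics

section Blocks

variable {n : ℕ}

theorem blk_mono (μ : List ℕ) : Monotone (blk μ) := by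
  induction μ with
  | nil => intro a b _; simp [blk]
  | cons m l ih =>
    intro a b hab
    simp only [blk]
    split_ifs with h1 h2
    · omega
    · omega
    · omega
    · exact Nat.succ_le_succ (ih (by omega))

theorem inYoung_s_iff (μ : List ℕ) (i : Fin (n - 1)) :
    InYoung μ (s i) ↔ blk μ (lo i).val = blk μ (hi i).val := by
  constructor
  · intro h
    have := h (hi i)
    rwa [s_hi] at this
  · intro h k
    by_cases h1 : k = lo i
    · subst h1; rw [s_lo, h]
    · by_cases h2 : k = hi i
      · subst h2; rw [s_hi, h]
      · rw [s_other i h1 h2]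

theorem InYoung.one (μ : List ℕ) : InYoung μ (1 : Equiv.Perm (Fin n)) := fun _ => rfl

theorem InYoung.mul {μ : List ℕ} {u v : Equiv.Perm (Fin n)} (hu : InYoung μ u)
    (hv : InYoung μ v) : InYoung μ (u * v) := fun k => (hu (v k)).trans (hv k)

theorem InYoung.inv {μ : List ℕ} {u : Equiv.Perm (Fin n)} (hu : InYoung μ u) :
    InYoung μ u⁻¹ := fun k => by
  have := hu (u⁻¹ k)
  rw [← Equiv.Perm.mul_apply, mul_inv_cancel] at this
  exact this.symm

/-- Left descents of an element of a Young subgroup belong to that subgroup. -/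
theorem InYoung.s_of_descL {μ : List ℕ} {u : Equiv.Perm (Fin n)} (hu : InYoung μ u)
    {i : Fin (n - 1)} (h : DescL i u) : InYoung μ (s i) := by
  rw [inYoung_s_iff]
  have h1 := blk_mono μ (Fin.le_def.mp (lo_lt_hi i).le)
  have h2 := blk_mono μ (Fin.le_def.mp h.le)
  rw [hu.inv, hu.inv] at h2
  exact le_antisymm h1 h2

/-- `w` has minimal length in its coset `S_μ w`: its inverse increases on the blocks of `μ`. -/
def MinL (μ : List ℕ) (w : Equiv.Perm (Fin n)) : Prop :=
  ∀ a b : Fin n, a < b → blk μ a.val = blk μ b.val → w⁻¹ a < w⁻¹ b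

theorem exists_descL_of_not_minL {μ : List ℕ} {w : Equiv.Perm (Fin n)} (h : ¬MinL μ w) :
    ∃ i, InYoung μ (s i) ∧ DescL i w := by
  by_contra hc
  push Not at hc
  refine h fun a b hab hblk => lt_of_forall_step (f := fun a => w⁻¹ a) hab fun i h1 h2 => ?_
  have hs : InYoung μ (s i) := by
    rw [inYoung_s_iff]
    refine le_antisymm (blk_mono μ (Fin.le_def.mp (lo_lt_hi i).le)) ?_
    exact (blk_mono μ (Fin.le_def.mp h2)).trans (hblk ▸ blk_mono μ (Fin.le_def.mp h1))
  exact lt_of_le_of_ne (not_lt.mp (hc i hs)) fun h' => lo_ne_hi i (w⁻¹.injective h')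

theorem MinL.eq_one {μ : List ℕ} {u x : Equiv.Perm (Fin n)} (hu : InYoung μ u)
    (hx : MinL μ x) (hux : MinL μ (u * x)) : u = 1 := by
  by_contra h
  obtain ⟨i, hi⟩ := exists_descL h
  have hs := (inYoung_s_iff μ i).mp (hu.s_of_descL hi)
  have h1 := hx _ _ hi (by rw [hu.inv, hu.inv, hs])
  have h2 := hux _ _ (lo_lt_hi i) hs
  rw [mul_inv_rev, Equiv.Perm.mul_apply, Equiv.Perm.mul_apply] at h2
  exact lt_asymm h1 h2

/-- Induction on permutations, peeling simple reflections of `S_μ` off on the left. -/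
theorem perm_induction_minL {μ : List ℕ} {P : Equiv.Perm (Fin n) → Prop}
    (base : ∀ w, MinL μ w → P w)
    (step : ∀ (i : Fin (n - 1)) (w : Equiv.Perm (Fin n)), InYoung μ (s i) → ¬DescL i w →
      P w → P (s i * w))
    (w : Equiv.Perm (Fin n)) : P w := by
  induction hk : len w using Nat.strong_induction_on generalizing w with
  | _ k ih =>
    by_cases hw : MinL μ w
    · exact base w hw
    · obtain ⟨i, hs, hi⟩ := exists_descL_of_not_minL hw
      have hlen := len_s_mul_of_descL hi
      have := step i (s i * w) hs (by rw [descL_s_mul_self]; simpa using hi)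
        (ih _ (by omega) _ rfl)
      rwa [s_mul_s_mul] at this

/-- The pairs `a < b` lying in different blocks of `μ`. -/
def crossPairs (n : ℕ) (μ : List ℕ) : Finset (Fin n × Fin n) :=
  (Finset.univ : Finset (Fin n × Fin n)).filter
    fun p => p.1 < p.2 ∧ blk μ p.1.val ≠ blk μ p.2.val

theorem mem_crossPairs {μ : List ℕ} {p : Fin n × Fin n} :
    p ∈ crossPairs n μ ↔ p.1 < p.2 ∧ blk μ p.1.val ≠ blk μ p.2.val := by simp [crossPairs]

theorem MinL.invs_subset {μ : List ℕ} {w : Equiv.Perm (Fin n)} (h : MinL μ w) :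
    invs w⁻¹ ⊆ crossPairs n μ := by
  intro p hp
  rw [mem_invs] at hp
  rw [mem_crossPairs]
  exact ⟨hp.1, fun hb => lt_asymm hp.2 (h _ _ hp.1 hb)⟩

/-- Permutations with the same inversions coincide. -/
theorem eq_of_invs_eq {v w : Equiv.Perm (Fin n)} (h : invs v = invs w) : v = w := by
  by_contra hne
  have h1 : (v * w⁻¹)⁻¹ ≠ 1 := by
    rw [Ne, inv_eq_one, mul_inv_eq_one]; exact hne
  obtain ⟨i, hi'⟩ := exists_descL h1
  rw [DescL, inv_inv, Equiv.Perm.mul_apply, Equiv.Perm.mul_apply] at hi'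
  have hw : w (w⁻¹ (lo i)) < w (w⁻¹ (hi i)) := by simpa using lo_lt_hi i
  generalize w⁻¹ (lo i) = a at *
  generalize w⁻¹ (hi i) = b at *
  rcases lt_trichotomy a b with hab | hab | hab
  · have : (a, b) ∈ invs w := h ▸ mem_invs.mpr ⟨hab, hi'⟩
    exact lt_asymm hw (mem_invs.mp this).2
  · exact absurd hi' (by rw [hab]; exact lt_irrefl _)
  · have : (b, a) ∈ invs v := h.symm ▸ mem_invs.mpr ⟨hab, hw⟩
    exact lt_asymm hi' (mem_invs.mp this).2

/-- The position of `a` after the blocks of `μ` are put in the opposite order. -/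
def revPos : List ℕ → ℕ → ℕ
  | [], a => a
  | m :: l, a => if a < m then l.sum + a else revPos l (a - m)

theorem revPos_lt (μ : List ℕ) {a : ℕ} (h : a < μ.sum) : revPos μ a < μ.sum := by
  induction μ generalizing a with
  | nil => simp at h
  | cons m l ih =>
    simp only [revPos, List.sum_cons] at *
    split_ifs with h1
    · omega
    · have := ih (a := a - m) (by omega); omega

theorem revPos_order (μ : List ℕ) {a b : ℕ} (hab : a < b) (hb : b < μ.sum) :
    if blk μ a = blk μ b then revPos μ a < revPos μ b else revPos μ b < revPos μ a := by
  induction μ generalizing a b with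
  | nil => simp at hb
  | cons m l ih =>
    simp only [revPos, blk, List.sum_cons] at *
    by_cases h1 : a < m
    · by_cases h2 : b < m
      · simp only [h1, h2, if_true]; omega
      · have := revPos_lt l (a := b - m) (by omega)
        simp only [h1, h2, if_true, if_false]
        rw [if_neg (by omega)]; omega
    · have h2 : ¬b < m := by omega
      simp only [h1, h2, if_false, Nat.add_right_cancel_iff]
      exact ih (by omega) (by omega)

theorem blk_append_of_lt (l l' : List ℕ) {k : ℕ} (h : k < l.sum) : blk (l ++ l') k = blk l k := by
  induction l generalizing k with
  | nil => simp at h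
  | cons m l ih =>
    simp only [blk, List.cons_append, List.sum_cons] at *
    split_ifs with h1
    · rfl
    · rw [ih (by omega)]

theorem blk_append_singleton (l : List ℕ) {m k : ℕ} (h : l.sum ≤ k) (h' : k < l.sum + m) :
    blk (l ++ [m]) k = l.length := by
  induction l generalizing k with
  | nil => simp at h'; simp [blk, h']
  | cons a l ih =>
    simp only [blk, List.cons_append, List.sum_cons, List.length_cons] at *
    rw [if_neg (by omega), ih (by omega) (by omega)]

theorem blk_reverse_revPos (μ : List ℕ) {a : ℕ} (h : a < μ.sum) :
    blk μ.reverse (revPos μ a) + blk μ a + 1 = μ.length := by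
  induction μ generalizing a with
  | nil => simp at h
  | cons m l ih =>
    simp only [revPos, blk, List.sum_cons, List.reverse_cons, List.length_cons] at *
    split_ifs with h1
    · rw [blk_append_singleton _ (by simp) (by simpa using h1)]; simp
    · have h2 : a - m < l.sum := by omega
      rw [blk_append_of_lt _ _ (by simpa using revPos_lt l h2), ← ih h2]
      omega

/-- The permutation moving the blocks of `μ` into the opposite order. -/
theorem exists_blockReversal {μ : List ℕ} (hμ : μ.sum = n) :
    ∃ d : Equiv.Perm (Fin n), invs d⁻¹ = crossPairs n μ ∧
      ∀ a b : Fin n, blk μ.reverse (d⁻¹ a).val = blk μ.reverse (d⁻¹ b).val ↔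
        blk μ a.val = blk μ b.val := by
  let f : Fin n → Fin n := fun a =>
    ⟨revPos μ a.val, lt_of_lt_of_eq (revPos_lt μ (lt_of_lt_of_eq a.isLt hμ.symm)) hμ⟩
  have hord : ∀ a b : Fin n, a < b →
      if blk μ a.val = blk μ b.val then f a < f b else f b < f a := fun a b hab =>
    revPos_order μ hab (lt_of_lt_of_eq b.isLt hμ.symm)
  have hinj : Function.Injective f := by
    have key : ∀ a b : Fin n, a < b → f a ≠ f b := fun a b hab => by
      have := hord a b hab
      split_ifs at this
      · exact this.ne
      · exact this.ne'
    intro a b hab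
    by_contra hne
    rcases lt_or_gt_of_ne hne with h | h
    · exact key a b h hab
    · exact key b a h hab.symm
  let e : Equiv.Perm (Fin n) := Equiv.ofBijective f (Finite.injective_iff_bijective.mp hinj)
  have he : ∀ a, e a = f a := fun a => rfl
  refine ⟨e⁻¹, ?_, fun a b => ?_⟩
  · rw [inv_inv]
    ext ⟨a, b⟩
    rw [mem_invs, mem_crossPairs]
    refine and_congr_right fun hab => ?_
    have := hord a b hab
    simp only [he]
    split_ifs at this with h
    · exact iff_of_false this.not_gt (by simpa using h)
    · exact iff_of_true this h
  · rw [inv_inv, he, he]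
    have h1 := blk_reverse_revPos μ (lt_of_lt_of_eq a.isLt hμ.symm)
    have h2 := blk_reverse_revPos μ (lt_of_lt_of_eq b.isLt hμ.symm)
    have e1 : (f a).val = revPos μ a.val := rfl
    have e2 : (f b).val = revPos μ b.val := rfl
    rw [e1, e2]
    omega

theorem crossPairs_subset_invs {μ : List ℕ} {d u : Equiv.Perm (Fin n)}
    (hd : invs d⁻¹ = crossPairs n μ) (hu : InYoung μ u) :
    crossPairs n μ ⊆ invs (u * d)⁻¹ := by
  intro p hp
  have hp' := mem_crossPairs.mp hp
  rw [mem_invs, mul_inv_rev, Equiv.Perm.mul_apply, Equiv.Perm.mul_apply]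
  refine ⟨hp'.1, ?_⟩
  have hne : blk μ (u⁻¹ p.1).val ≠ blk μ (u⁻¹ p.2).val := by rw [hu.inv, hu.inv]; exact hp'.2
  have hlt : u⁻¹ p.1 < u⁻¹ p.2 := by
    by_contra hc
    have h1 := blk_mono μ (Fin.le_def.mp (not_lt.mp hc))
    have h2 := blk_mono μ (Fin.le_def.mp hp'.1.le)
    rw [hu.inv, hu.inv] at h1
    exact hp'.2 (le_antisymm h2 h1)
  have : (u⁻¹ p.1, u⁻¹ p.2) ∈ invs d⁻¹ := hd ▸ mem_crossPairs.mpr ⟨hlt, hne⟩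
  exact (mem_invs.mp this).2

theorem len_le_len_mul {μ : List ℕ} {d u : Equiv.Perm (Fin n)}
    (hd : invs d⁻¹ = crossPairs n μ) (hu : InYoung μ u) : len d ≤ len (u * d) := by
  rw [← len_inv d, ← len_inv (u * d), len_eq_card, len_eq_card, hd]
  exact Finset.card_le_card (crossPairs_subset_invs hd hu)

/-- `d` reverses the blocks of `μ`, carrying the blocks of `ν` to blocks of `μ`. -/
structure IsBlockReversal (μ ν : List ℕ) (d : Equiv.Perm (Fin n)) : Prop where
  invs_eq : invs d⁻¹ = crossPairs n μ
  blk_iff : ∀ a b : Fin n, blk ν (d⁻¹ a).val = blk ν (d⁻¹ b).val ↔ blk μ a.val = blk μ b.val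

theorem IsBlockReversal.isMinDC {μ ν : List ℕ} {d : Equiv.Perm (Fin n)}
    (hd : IsBlockReversal μ ν d) : IsMinDC μ ν d := by
  intro u v hu hv
  have hv' : InYoung μ (d * v * d⁻¹) := by
    intro k
    rw [← hd.blk_iff]
    have := hv (d⁻¹ k)
    simpa [Equiv.Perm.mul_apply] using this
  have := len_le_len_mul hd.invs_eq (hu.mul hv')
  rwa [mul_assoc, inv_mul_cancel_right, ← mul_assoc] at this

theorem isBlockReversal_of_longest {μ : List ℕ} (hμ : μ.sum = n) {d : Equiv.Perm (Fin n)}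
    (hdmin : IsMinDC μ μ.reverse d)
    (hdlong : ∀ x : Equiv.Perm (Fin n), IsMinDC μ μ.reverse x → len x ≤ len d) :
    IsBlockReversal μ μ.reverse d := by
  obtain ⟨d₀, h1, h2⟩ := exists_blockReversal hμ
  have hd₀ : IsBlockReversal μ μ.reverse d₀ := ⟨h1, h2⟩
  have hmin : MinL μ d := by
    by_contra hc
    obtain ⟨i, hs, hi⟩ := exists_descL_of_not_minL hc
    have := hdmin (s i) 1 hs (InYoung.one _)
    rw [mul_one, ← len_s_mul_of_descL hi] at this
    omega
  have hlen := hdlong d₀ hd₀.isMinDC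
  rw [← len_inv d₀, ← len_inv d, len_eq_card, len_eq_card, h1] at hlen
  have heq := Finset.eq_of_subset_of_card_le hmin.invs_subset hlen
  have : d⁻¹ = d₀⁻¹ := eq_of_invs_eq (heq.trans h1.symm)
  rwa [inv_inj.mp this]

namespace IsBlockReversal

variable {μ ν : List ℕ} {d : Equiv.Perm (Fin n)}

theorem inv_lt_inv_iff (hd : IsBlockReversal μ ν d) {a b : Fin n} (hab : a < b) :
    d⁻¹ a < d⁻¹ b ↔ blk μ a.val = blk μ b.val := by
  have h : (a, b) ∈ invs d⁻¹ ↔ (a, b) ∈ crossPairs n μ := by rw [hd.invs_eq]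
  rw [mem_invs, mem_crossPairs] at h
  simp only [hab, true_and] at h
  rw [← not_iff_not, ← Ne, ← h, not_lt]
  exact ⟨fun h => lt_of_le_of_ne h fun h' => hab.ne' (d⁻¹.injective h'), le_of_lt⟩

theorem minL (hd : IsBlockReversal μ ν d) : MinL μ d := fun _ _ hab h =>
  (hd.inv_lt_inv_iff hab).mpr h

theorem len_le (hd : IsBlockReversal μ ν d) {w : Equiv.Perm (Fin n)} (hw : MinL μ w) :
    len w ≤ len d := by
  rw [← len_inv d, ← len_inv w, len_eq_card, len_eq_card, hd.invs_eq]
  exact Finset.card_le_card hw.invs_subset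

/-- Conjugation by `d` carries the simple reflections of `S_ν` to those of `S_μ`. -/
theorem exists_conj (hd : IsBlockReversal μ ν d) {j : Fin (n - 1)} (hj : InYoung ν (s j)) :
    ∃ i : Fin (n - 1), InYoung μ (s i) ∧ d (lo j) = lo i ∧ d (hi j) = hi i := by
  have hblk : blk μ (d (lo j)).val = blk μ (d (hi j)).val := by
    rw [← hd.blk_iff]
    simpa using (inYoung_s_iff ν j).mp hj
  have hlt : d (lo j) < d (hi j) := by
    rcases lt_trichotomy (d (lo j)) (d (hi j)) with h | h | h
    · exact h
    · exact absurd (d.injective h) (lo_ne_hi j)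
    · have := hd.minL _ _ h hblk.symm
      simp only [← Equiv.Perm.mul_apply, inv_mul_cancel, Equiv.Perm.one_apply] at this
      exact absurd this (lo_lt_hi j).not_gt
  have hlt' := Fin.lt_def.mp hlt
  have hbd := (d (hi j)).isLt
  have hsucc : (d (hi j)).val = (d (lo j)).val + 1 := by
    by_contra hne
    let c : Fin n := ⟨(d (lo j)).val + 1, by omega⟩
    have h1 : d (lo j) < c := by rw [Fin.lt_def]; simp [c]
    have h2 : c < d (hi j) := by rw [Fin.lt_def]; simp only [c]; omega
    have b1 := blk_mono μ (Fin.le_def.mp h1.le)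
    have b2 := blk_mono μ (Fin.le_def.mp h2.le)
    have l1 := hd.minL _ _ h1 (by omega)
    have l2 := hd.minL _ _ h2 (by omega)
    simp only [← Equiv.Perm.mul_apply, inv_mul_cancel, Equiv.Perm.one_apply] at l1 l2
    rw [Fin.lt_def, lo_val] at l1
    rw [Fin.lt_def, hi_val] at l2
    omega
  refine ⟨⟨(d (lo j)).val, by omega⟩, ?_, rfl, Fin.ext (by rw [hsucc, hi_val])⟩
  rw [inYoung_s_iff, show lo ⟨(d (lo j)).val, by omega⟩ = d (lo j) from rfl,
    show hi ⟨(d (lo j)).val, by omega⟩ = d (hi j) from Fin.ext (by rw [hsucc, hi_val]), hblk]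

theorem len_add_len (hd : IsBlockReversal μ ν d) {x : Equiv.Perm (Fin n)} (hx : MinL μ x) :
    len x + len (x⁻¹ * d) = len d := by
  have h : len (x⁻¹ * d) = (crossPairs n μ \ invs x⁻¹).card := by
    rw [len_eq_card]
    refine Finset.card_bij (fun p _ => (d p.2, d p.1)) ?_ ?_ ?_
    · rintro ⟨p, r⟩ hp
      rw [mem_invs] at hp
      simp only [Equiv.Perm.mul_apply] at hp
      have hlt : d r < d p := by
        rcases lt_trichotomy (d p) (d r) with h | h | h
        · have := hd.inv_lt_inv_iff h
          simp only [← Equiv.Perm.mul_apply, inv_mul_cancel, Equiv.Perm.one_apply, hp.1,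
            true_iff] at this
          exact absurd (hx _ _ h this) hp.2.not_gt
        · exact absurd (d.injective h) hp.1.ne
        · exact h
      have hcross := hd.inv_lt_inv_iff hlt
      simp only [← Equiv.Perm.mul_apply, inv_mul_cancel, Equiv.Perm.one_apply] at hcross
      rw [Finset.mem_sdiff, mem_crossPairs, mem_invs]
      exact ⟨⟨hlt, fun hb => lt_asymm hp.1 (hcross.mpr hb)⟩, fun hh => lt_asymm hp.2 hh.2⟩
    · intro p _ p' _ h
      simp only [Prod.mk.injEq, EmbeddingLike.apply_eq_iff_eq] at h
      exact Prod.ext h.2 h.1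
    · rintro ⟨a, b⟩ hp
      rw [Finset.mem_sdiff, mem_crossPairs, mem_invs] at hp
      refine ⟨(d⁻¹ b, d⁻¹ a), ?_, by simp⟩
      rw [mem_invs]
      simp only [Equiv.Perm.mul_apply]
      have hx' : x⁻¹ a < x⁻¹ b := by
        by_contra hc
        exact hp.2 ⟨hp.1.1, lt_of_le_of_ne (not_lt.mp hc)
          fun h' => hp.1.1.ne' (x⁻¹.injective h')⟩
      refine ⟨?_, by simpa using hx'⟩
      have := mem_invs.mp (hd.invs_eq ▸ mem_crossPairs.mpr hp.1 : (a, b) ∈ invs d⁻¹)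
      exact this.2
  rw [h, ← len_inv x, ← len_inv d, len_eq_card, len_eq_card, hd.invs_eq,
    Finset.card_sdiff_of_subset hx.invs_subset]
  have := Finset.card_le_card hx.invs_subset
  omega

theorem minL_mul_inv (hd : IsBlockReversal μ ν d) {w : Equiv.Perm (Fin n)}
    (hw : MinL ν w⁻¹) : MinL μ (d * w⁻¹) := by
  intro a b hab h
  have := hw _ _ (hd.minL a b hab h) ((hd.blk_iff a b).mpr h)
  simpa [mul_inv_rev] using this

end IsBlockReversal

end Blocks

section PolynomialClifford

variable {n : ℕ}

/-- Families `x, x', c` satisfying the relations of the subalgebra of `H_n` generated by the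
`X_i^{±1}` and the `C_i`. -/
structure IsPolyClifford {B : Type} [Ring B] (x x' c : Fin n → B) : Prop where
  x_x' : ∀ i, x i * x' i = 1
  x'_x : ∀ i, x' i * x i = 1
  x_comm : ∀ i j, x i * x j = x j * x i
  c_sq : ∀ i, c i * c i = 1
  c_anti : ∀ i j, i ≠ j → c i * c j = -(c j * c i)
  c_x : ∀ i, c i * x i = x' i * c i
  c_x_comm : ∀ i j, i ≠ j → c i * x j = x j * c i

/-- Generators of the algebra `F[X_1^{±1},…,X_n^{±1}] ⋊ Cl_n`. -/
inductive PGen (n : ℕ) : Type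
  | X : Fin n → PGen n
  | Xinv : Fin n → PGen n
  | C : Fin n → PGen n

variable (F : Type) [Field F]

/-- Defining relations of `F[X_1^{±1},…,X_n^{±1}] ⋊ Cl_n`. -/
inductive PRel (n : ℕ) : FreeAlgebra F (PGen n) → FreeAlgebra F (PGen n) → Prop
  | XXinv (i : Fin n) : PRel n (FreeAlgebra.ι F (PGen.X i) * FreeAlgebra.ι F (PGen.Xinv i)) 1
  | XinvX (i : Fin n) : PRel n (FreeAlgebra.ι F (PGen.Xinv i) * FreeAlgebra.ι F (PGen.X i)) 1
  | XX (i j : Fin n) : PRel n (FreeAlgebra.ι F (PGen.X i) * FreeAlgebra.ι F (PGen.X j))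
      (FreeAlgebra.ι F (PGen.X j) * FreeAlgebra.ι F (PGen.X i))
  | CC (i : Fin n) : PRel n (FreeAlgebra.ι F (PGen.C i) * FreeAlgebra.ι F (PGen.C i)) 1
  | Canti (i j : Fin n) (h : i ≠ j) :
      PRel n (FreeAlgebra.ι F (PGen.C i) * FreeAlgebra.ι F (PGen.C j))
        (-(FreeAlgebra.ι F (PGen.C j) * FreeAlgebra.ι F (PGen.C i)))
  | CX (i : Fin n) : PRel n (FreeAlgebra.ι F (PGen.C i) * FreeAlgebra.ι F (PGen.X i))
      (FreeAlgebra.ι F (PGen.Xinv i) * FreeAlgebra.ι F (PGen.C i))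
  | CXo (i j : Fin n) (h : i ≠ j) :
      PRel n (FreeAlgebra.ι F (PGen.C i) * FreeAlgebra.ι F (PGen.X j))
        (FreeAlgebra.ι F (PGen.X j) * FreeAlgebra.ι F (PGen.C i))

/-- The algebra `F[X_1^{±1},…,X_n^{±1}] ⋊ Cl_n`. -/
def PA (n : ℕ) : Type := RingQuot (PRel F n)

noncomputable instance : Ring (PA F n) := inferInstanceAs (Ring (RingQuot (PRel F n)))

noncomputable instance : Algebra F (PA F n) :=
  inferInstanceAs (Algebra F (RingQuot (PRel F n)))

/-- The quotient map onto `PA F n`. -/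
noncomputable def PA.mk : FreeAlgebra F (PGen n) →ₐ[F] PA F n := RingQuot.mkAlgHom F (PRel F n)

variable {F} in
theorem PA.mk_rel {a b : FreeAlgebra F (PGen n)} (h : PRel F n a b) : PA.mk F a = PA.mk F b :=
  RingQuot.mkAlgHom_rel F h

/-- The generator `X_i` of `PA F n`. -/
noncomputable def px (i : Fin n) : PA F n :=
  PA.mk F (FreeAlgebra.ι F (PGen.X i))

/-- The generator `X_i⁻¹` of `PA F n`. -/
noncomputable def px' (i : Fin n) : PA F n :=
  PA.mk F (FreeAlgebra.ι F (PGen.Xinv i))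

/-- The generator `C_i` of `PA F n`. -/
noncomputable def pc (i : Fin n) : PA F n :=
  PA.mk F (FreeAlgebra.ι F (PGen.C i))

theorem isPolyClifford_PA : IsPolyClifford (px F (n := n)) (px' F) (pc F) where
  x_x' i := by simpa [px, px'] using PA.mk_rel (PRel.XXinv (F := F) i)
  x'_x i := by simpa [px, px'] using PA.mk_rel (PRel.XinvX (F := F) i)
  x_comm i j := by simpa [px] using PA.mk_rel (PRel.XX (F := F) i j)
  c_sq i := by simpa [pc] using PA.mk_rel (PRel.CC (F := F) i)
  c_anti i j h := by simpa [pc] using PA.mk_rel (PRel.Canti (F := F) i j h)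
  c_x i := by simpa [pc, px, px'] using PA.mk_rel (PRel.CX (F := F) i)
  c_x_comm i j h := by simpa [pc, px] using PA.mk_rel (PRel.CXo (F := F) i j h)

variable {F}

namespace IsPolyClifford

variable {B : Type} [Ring B] {x x' c : Fin n → B}

theorem comp (h : IsPolyClifford x x' c) (w : Equiv.Perm (Fin n)) :
    IsPolyClifford (fun i => x (w i)) (fun i => x' (w i)) (fun i => c (w i)) where
  x_x' _ := h.x_x' _
  x'_x _ := h.x'_x _
  x_comm _ _ := h.x_comm _ _
  c_sq _ := h.c_sq _
  c_anti _ _ hij := h.c_anti _ _ fun e => hij (w.injective e)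
  c_x _ := h.c_x _
  c_x_comm _ _ hij := h.c_x_comm _ _ fun e => hij (w.injective e)

theorem inv_eq (h : IsPolyClifford x x' c) (i : Fin n) : x' i = c i * x i * c i := by
  rw [h.c_x, mul_assoc, h.c_sq, mul_one]

theorem x_c (h : IsPolyClifford x x' c) (i : Fin n) : x i * c i = c i * x' i := by
  rw [h.inv_eq, ← mul_assoc, ← mul_assoc, h.c_sq, one_mul]

theorem x_c_comm (h : IsPolyClifford x x' c) {i j : Fin n} (hij : i ≠ j) :
    x i * c j = c j * x i := (h.c_x_comm _ _ hij.symm).symm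

theorem x'_c (h : IsPolyClifford x x' c) (i : Fin n) : x' i * c i = c i * x i := (h.c_x i).symm

theorem x'_c_comm (h : IsPolyClifford x x' c) {i j : Fin n} (hij : i ≠ j) :
    x' i * c j = c j * x' i := by
  rw [h.inv_eq, mul_assoc, h.c_anti i j hij, mul_neg, ← mul_assoc, mul_assoc (c i), h.x_c_comm hij,
    ← mul_assoc (c i), h.c_anti i j hij]
  simp [mul_assoc]

theorem x_x'_comm (h : IsPolyClifford x x' c) (i j : Fin n) : x i * x' j = x' j * x i := by
  have : Commute (x i) (x j) := h.x_comm i j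
  let u : Bˣ := ⟨x j, x' j, h.x_x' j, h.x'_x j⟩
  exact (Commute.units_inv_right (u := u) this)

theorem x'_comm (h : IsPolyClifford x x' c) (i j : Fin n) : x' i * x' j = x' j * x' i := by
  have : Commute (x' i) (x j) := (h.x_x'_comm j i).symm
  let u : Bˣ := ⟨x j, x' j, h.x_x' j, h.x'_x j⟩
  exact (Commute.units_inv_right (u := u) this)

variable [Algebra F B]

/-- The value of a morphism out of `PA F n` on generators. -/
def genVal (x x' c : Fin n → B) : PGen n → B
  | PGen.X i => x i
  | PGen.Xinv i => x' i
  | PGen.C i => c i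

/-- The universal property of `PA F n`. -/
noncomputable def lift (h : IsPolyClifford x x' c) : PA F n →ₐ[F] B :=
  RingQuot.liftAlgHom F ⟨FreeAlgebra.lift F (genVal x x' c), fun a b hab => by
      cases hab with
      | XXinv i => simpa [genVal] using h.x_x' i
      | XinvX i => simpa [genVal] using h.x'_x i
      | XX i j => simpa [genVal] using h.x_comm i j
      | CC i => simpa [genVal] using h.c_sq i
      | Canti i j hij => simpa [genVal] using h.c_anti i j hij
      | CX i => simpa [genVal] using h.c_x i
      | CXo i j hij => simpa [genVal] using h.c_x_comm i j hij⟩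

theorem lift_mk (h : IsPolyClifford x x' c) (a : FreeAlgebra F (PGen n)) :
    h.lift (PA.mk F a) = FreeAlgebra.lift F (genVal x x' c) a :=
  RingQuot.liftAlgHom_mkAlgHom_apply F _ _ _

@[simp] theorem lift_px (h : IsPolyClifford x x' c) (i : Fin n) :
    h.lift (F := F) (px F i) = x i := by simp [px, lift_mk, genVal]

@[simp] theorem lift_px' (h : IsPolyClifford x x' c) (i : Fin n) :
    h.lift (F := F) (px' F i) = x' i := by simp [px', lift_mk, genVal]

@[simp] theorem lift_pc (h : IsPolyClifford x x' c) (i : Fin n) :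
    h.lift (F := F) (pc F i) = c i := by simp [pc, lift_mk, genVal]

end IsPolyClifford

theorem PA.induction {p : PA F n → Prop} (hx : ∀ i, p (px F i)) (hc : ∀ i, p (pc F i))
    (halg : ∀ r : F, p (algebraMap F _ r)) (hadd : ∀ a b, p a → p b → p (a + b))
    (hmul : ∀ a b, p a → p b → p (a * b)) (a : PA F n) : p a := by
  obtain ⟨a, rfl⟩ : ∃ b, PA.mk F b = a := RingQuot.mkAlgHom_surjective F (PRel F n) a
  induction a using FreeAlgebra.induction with
  | grade0 r => simpa using halg r
  | grade1 g =>
    cases g with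
    | X i => exact hx i
    | Xinv i =>
      have := (isPolyClifford_PA F).inv_eq i
      rw [show PA.mk F (FreeAlgebra.ι F (PGen.Xinv i)) = px' F i from rfl,
        this]
      exact hmul _ _ (hmul _ _ (hc i) (hx i)) (hc i)
    | C i => exact hc i
  | mul a b ha hb => simpa using hmul _ _ ha hb
  | add a b ha hb => simpa using hadd _ _ ha hb

theorem PA.algHom_ext {B : Type} [Ring B] [Algebra F B] {f g : PA F n →ₐ[F] B}
    (hx : ∀ i, f (px F i) = g (px F i)) (hc : ∀ i, f (pc F i) = g (pc F i)) : f = g := by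
  refine AlgHom.ext fun a => ?_
  induction a using PA.induction with
  | hx i => exact hx i
  | hc i => exact hc i
  | halg r => simp
  | hadd a b ha hb => rw [map_add, map_add, ha, hb]
  | hmul a b ha hb => rw [map_mul, map_mul, ha, hb]

/-- The action of `S_n` on `PA F n` permuting the generators. -/
noncomputable def pperm (w : Equiv.Perm (Fin n)) : PA F n →ₐ[F] PA F n :=
  ((isPolyClifford_PA F).comp w).lift

@[simp] theorem pperm_px (w : Equiv.Perm (Fin n)) (i : Fin n) : pperm w (px F i) = px F (w i) :=
  IsPolyClifford.lift_px _ _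

@[simp] theorem pperm_px' (w : Equiv.Perm (Fin n)) (i : Fin n) :
    pperm w (px' F i) = px' F (w i) := IsPolyClifford.lift_px' _ _

@[simp] theorem pperm_pc (w : Equiv.Perm (Fin n)) (i : Fin n) : pperm w (pc F i) = pc F (w i) :=
  IsPolyClifford.lift_pc _ _

theorem pperm_mul (w v : Equiv.Perm (Fin n)) (a : PA F n) :
    pperm (w * v) a = pperm w (pperm v a) := by
  rw [← AlgHom.comp_apply]
  congr 1
  exact PA.algHom_ext (by simp) (by simp)

@[simp] theorem pperm_one (a : PA F n) : pperm 1 a = a := by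
  rw [← AlgHom.id_apply (R := F) a]
  congr 1
  exact PA.algHom_ext (by simp) (by simp)

@[simp] theorem pperm_s_s (i : Fin (n - 1)) (a : PA F n) : pperm (s i) (pperm (s i) a) = a := by
  rw [← pperm_mul, s_mul_self, pperm_one]

end PolynomialClifford

section Derivation

variable {F : Type} [Field F] {n : ℕ}

theorem assoc_mul {B : Type} [Ring B] {a b c d : B} (h : a * b = c * d) (z : B) :
    a * (b * z) = c * (d * z) := by rw [← mul_assoc, h, mul_assoc]

theorem assoc_neg {B : Type} [Ring B] {a b c d : B} (h : a * b = -(c * d)) (z : B) :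
    a * (b * z) = -(c * (d * z)) := by rw [← mul_assoc, h, neg_mul, mul_assoc]

theorem assoc_one {B : Type} [Ring B] {a b : B} (h : a * b = 1) (z : B) :
    a * (b * z) = z := by rw [← mul_assoc, h, one_mul]

/-- Values on `C_k` of the twisted derivation `D_i` determined by `T_i a = s_i(a) T_i + D_i(a)`. -/
noncomputable def pdC (ξ : F) (i : Fin (n - 1)) (k : Fin n) : PA F n :=
  if k = hi i then ξ • (pc F (hi i) - pc F (lo i)) else 0

/-- Values of `D_i` on `X_k`. -/
noncomputable def pdX (ξ : F) (i : Fin (n - 1)) (k : Fin n) : PA F n :=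
  if k = lo i then -(ξ • (px F (hi i) + pc F (lo i) * pc F (hi i) * px F (lo i)))
  else if k = hi i then ξ • (px F (hi i) - pc F (lo i) * pc F (hi i) * px F (hi i)) else 0

/-- Values of `D_i` on `X_k⁻¹`. -/
noncomputable def pdX' (ξ : F) (i : Fin (n - 1)) (k : Fin n) : PA F n :=
  if k = lo i then ξ • (px' F (lo i) + pc F (lo i) * pc F (hi i) * px F (hi i))
  else if k = hi i then -(ξ • (px' F (lo i) - pc F (lo i) * pc F (hi i) * px F (lo i))) else 0

/-- Upper triangular `2 × 2` matrices. -/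
def tri {B : Type} [Ring B] (a b c : B) : Matrix (Fin 2) (Fin 2) B := !![a, b; 0, c]

theorem tri_mul {B : Type} [Ring B] (a b c a' b' c' : B) :
    tri a b c * tri a' b' c' = tri (a * a') (a * b' + b * c') (c * c') := by
  simp [tri]

theorem tri_one {B : Type} [Ring B] : tri 1 0 1 = (1 : Matrix (Fin 2) (Fin 2) B) := by
  simp [tri, Matrix.one_fin_two]

theorem tri_neg {B : Type} [Ring B] (a b c : B) : -tri a b c = tri (-a) (-b) (-c) := by
  ext i j; fin_cases i <;> fin_cases j <;> simp [tri]

theorem lo_hi_cases (i : Fin (n - 1)) (k : Fin n) :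
    k = lo i ∨ k = hi i ∨ (k ≠ lo i ∧ k ≠ hi i) := by tauto

theorem isPolyClifford_tri (ξ : F) (i : Fin (n - 1)) :
    IsPolyClifford (fun k => tri (px F (s i k)) (pdX ξ i k) (px F k))
      (fun k => tri (px' F (s i k)) (pdX' ξ i k) (px' F k))
      (fun k => tri (pc F (s i k)) (pdC ξ i k) (pc F k)) := by
  have h := isPolyClifford_PA F (n := n)
  have hs := h.comp (s i)
  have hlh : lo i ≠ hi i := lo_ne_hi i
  have hhl := hlh.symm
  have c1 := h.c_sq (lo i)
  have c2 := h.c_sq (hi i)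
  have c3 := h.c_anti _ _ hhl
  have x1 := h.x_c (lo i)
  have x2 := h.x'_c (lo i)
  have x3 := h.x_c (hi i)
  have x4 := h.x'_c (hi i)
  have x5 := h.x_c_comm hlh
  have x6 := h.x'_c_comm hlh
  have x7 := h.x_c_comm hhl
  have x8 := h.x'_c_comm hhl
  have y1 := h.x_x' (lo i)
  have y2 := h.x'_x (lo i)
  have y3 := h.x_x' (hi i)
  have y4 := h.x'_x (hi i)
  have y5 := h.x_comm (hi i) (lo i)
  have y6 := h.x_x'_comm (hi i) (lo i)
  have key : ∀ a b c a' b' c' : PA F n, a = a' → b = b' → c = c' → tri a b c = tri a' b' c' := by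
    rintro _ _ _ _ _ _ rfl rfl rfl; rfl
  have oc : ∀ k, k ≠ lo i → k ≠ hi i →
      pc F k * pc F (lo i) = -(pc F (lo i) * pc F k) ∧
      pc F k * pc F (hi i) = -(pc F (hi i) * pc F k) ∧
      px F (lo i) * pc F k = pc F k * px F (lo i) ∧
      px F (hi i) * pc F k = pc F k * px F (hi i) ∧
      px' F (lo i) * pc F k = pc F k * px' F (lo i) ∧
      px' F (hi i) * pc F k = pc F k * px' F (hi i) ∧
      px F k * pc F (lo i) = pc F (lo i) * px F k ∧
      px F k * pc F (hi i) = pc F (hi i) * px F k ∧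
      px F k * px F (lo i) = px F (lo i) * px F k ∧
      px F k * px F (hi i) = px F (hi i) * px F k :=
    fun k h1 h2 => ⟨h.c_anti _ _ h1, h.c_anti _ _ h2, h.x_c_comm h1.symm, h.x_c_comm h2.symm,
      h.x'_c_comm h1.symm, h.x'_c_comm h2.symm, h.x_c_comm h1, h.x_c_comm h2,
      h.x_comm _ _, h.x_comm _ _⟩
  refine ⟨fun k => ?_, fun k => ?_, fun k l => ?_, fun k => ?_, fun k l hkl => ?_, fun k => ?_,
    fun k l hkl => ?_⟩
  · rw [tri_mul, ← tri_one]
    refine key _ _ _ _ _ _ (hs.x_x' k) ?_ (h.x_x' k)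
    rcases lo_hi_cases i k with rfl | rfl | ⟨h1, h2⟩
    · simp [pdX, pdX', s_lo, mul_add, add_mul, smul_add, mul_assoc, y1, y4, y6, assoc_mul x3,
        assoc_mul x7]
    · simp [pdX, pdX', s_hi, hhl, mul_sub, sub_mul, smul_sub, mul_assoc, y1, y2, y3, assoc_mul x1,
        assoc_mul x6]
    · simp [pdX, pdX', h1, h2]
  · rw [tri_mul, ← tri_one]
    refine key _ _ _ _ _ _ (hs.x'_x k) ?_ (h.x'_x k)
    rcases lo_hi_cases i k with rfl | rfl | ⟨h1, h2⟩
    · simp [pdX, pdX', s_lo, mul_add, add_mul, smul_add, mul_assoc, y2, y4, y5, assoc_mul x4,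
        assoc_mul x8]
    · simp [pdX, pdX', s_hi, hhl, mul_sub, sub_mul, smul_sub, mul_assoc, assoc_mul x2, assoc_mul x5]
    · simp [pdX, pdX', h1, h2]
  · rw [tri_mul, tri_mul]
    refine key _ _ _ _ _ _ (hs.x_comm k l) ?_ (h.x_comm k l)
    rcases lo_hi_cases i k with rfl | rfl | ⟨h1, h2⟩ <;>
      rcases lo_hi_cases i l with rfl | rfl | ⟨h3, h4⟩
    · rfl
    · simp [pdX, s_lo, s_hi, hhl, mul_add, add_mul, mul_sub, sub_mul, smul_add, smul_sub, mul_assoc,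
        y2, y4, y5, assoc_mul x1, assoc_mul x3, assoc_mul x6, assoc_mul x7]
      abel
    · obtain ⟨o1, o2, o3, o4, o5, o6, o7, o8, o9, o10⟩ := oc l h3 h4
      simp [pdX, s_lo, mul_add, add_mul, smul_add, mul_assoc, s_other i h3 h4, h3, h4, o9, o10,
        assoc_mul o7, assoc_mul o8]
    · simp [pdX, s_lo, s_hi, hhl, mul_add, add_mul, mul_sub, sub_mul, smul_add, smul_sub, mul_assoc,
        y2, y4, y5, assoc_mul x1, assoc_mul x3, assoc_mul x6, assoc_mul x7]
      abel
    · rfl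
    · obtain ⟨o1, o2, o3, o4, o5, o6, o7, o8, o9, o10⟩ := oc l h3 h4
      simp [pdX, s_hi, hhl, mul_sub, sub_mul, smul_sub, mul_assoc, s_other i h3 h4, h3, h4, o10,
        assoc_mul o7, assoc_mul o8]
    · obtain ⟨o1, o2, o3, o4, o5, o6, o7, o8, o9, o10⟩ := oc k h1 h2
      simp [pdX, s_lo, mul_add, add_mul, smul_add, mul_assoc, s_other i h1 h2, h1, h2, o9, o10,
        assoc_mul o7, assoc_mul o8]
    · obtain ⟨o1, o2, o3, o4, o5, o6, o7, o8, o9, o10⟩ := oc k h1 h2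
      simp [pdX, s_hi, hhl, mul_sub, sub_mul, smul_sub, mul_assoc, s_other i h1 h2, h1, h2, o10,
        assoc_mul o7, assoc_mul o8]
    · simp [pdX, s_other i h1 h2, s_other i h3 h4, h1, h2, h3, h4]
  · rw [tri_mul, ← tri_one]
    refine key _ _ _ _ _ _ (hs.c_sq k) ?_ (h.c_sq k)
    rcases lo_hi_cases i k with rfl | rfl | ⟨h1, h2⟩
    · simp [pdC, s_lo, hlh]
    · simp [pdC, s_hi, mul_sub, sub_mul, smul_sub, c1, c2]
    · simp [pdC, h2]
  · rw [tri_mul, tri_mul, tri_neg]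
    refine key _ _ _ _ _ _ (hs.c_anti k l hkl) ?_ (h.c_anti k l hkl)
    rcases lo_hi_cases i k with rfl | rfl | ⟨h1, h2⟩ <;>
      rcases lo_hi_cases i l with rfl | rfl | ⟨h3, h4⟩
    · exact absurd rfl hkl
    · simp [pdC, s_lo, s_hi, hlh, mul_sub, sub_mul, smul_sub, c1, c2, c3]
    · obtain ⟨o1, o2, o3, o4, o5, o6, o7, o8, o9, o10⟩ := oc l h3 h4
      simp [pdC, s_lo, hlh, s_other i h3 h4, h4]
    · simp [pdC, s_lo, s_hi, hlh, mul_sub, sub_mul, smul_sub, c1, c2, c3]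
      abel
    · exact absurd rfl hkl
    · obtain ⟨o1, o2, o3, o4, o5, o6, o7, o8, o9, o10⟩ := oc l h3 h4
      simp [pdC, s_hi, mul_sub, sub_mul, smul_sub, s_other i h3 h4, h4, o1, o2]
      abel
    · obtain ⟨o1, o2, o3, o4, o5, o6, o7, o8, o9, o10⟩ := oc k h1 h2
      simp [pdC, s_lo, hlh, s_other i h1 h2, h2]
    · obtain ⟨o1, o2, o3, o4, o5, o6, o7, o8, o9, o10⟩ := oc k h1 h2
      simp [pdC, s_hi, mul_sub, sub_mul, smul_sub, s_other i h1 h2, h2, o1, o2]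
      abel
    · simp [pdC, s_other i h1 h2, s_other i h3 h4, h2, h4]
  · rw [tri_mul, tri_mul]
    refine key _ _ _ _ _ _ (hs.c_x k) ?_ (h.c_x k)
    rcases lo_hi_cases i k with rfl | rfl | ⟨h1, h2⟩
    · simp [pdX, pdX', pdC, s_lo, hlh, mul_add, add_mul, smul_add, mul_assoc, x2, x7, assoc_one c1,
        assoc_one c2, assoc_neg c3]
    · simp [pdX, pdX', pdC, s_hi, hhl, mul_sub, sub_mul, smul_sub, mul_assoc, x2, x5, x6, assoc_one
        c1, assoc_one c2]
    · simp [pdX, pdX', pdC, h1, h2]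
  · rw [tri_mul, tri_mul]
    refine key _ _ _ _ _ _ (hs.c_x_comm k l hkl) ?_ (h.c_x_comm k l hkl)
    rcases lo_hi_cases i k with rfl | rfl | ⟨h1, h2⟩ <;>
      rcases lo_hi_cases i l with rfl | rfl | ⟨h3, h4⟩
    · exact absurd rfl hkl
    · simp [pdX, pdC, s_lo, s_hi, hlh, hhl, mul_sub, sub_mul, smul_sub, mul_assoc, x7, assoc_one c1,
        assoc_one c2, assoc_neg c3]
      abel
    · obtain ⟨o1, o2, o3, o4, o5, o6, o7, o8, o9, o10⟩ := oc l h3 h4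
      simp [pdX, pdC, s_lo, hlh, s_other i h3 h4, h3, h4]
    · simp [pdX, pdC, s_lo, s_hi, mul_add, add_mul, mul_sub, sub_mul, smul_add, smul_sub, mul_assoc,
        x3, x5, x7, assoc_one c1, assoc_one c2]
      abel
    · exact absurd rfl hkl
    · obtain ⟨o1, o2, o3, o4, o5, o6, o7, o8, o9, o10⟩ := oc l h3 h4
      simp [pdX, pdC, s_hi, mul_sub, sub_mul, smul_sub, s_other i h3 h4, h3, h4, o7, o8]
    · obtain ⟨o1, o2, o3, o4, o5, o6, o7, o8, o9, o10⟩ := oc k h1 h2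
      simp [pdX, pdC, s_lo, mul_add, add_mul, smul_add, mul_assoc, s_other i h1 h2, h2, o3, o4,
        assoc_neg o1, assoc_neg o2]
    · obtain ⟨o1, o2, o3, o4, o5, o6, o7, o8, o9, o10⟩ := oc k h1 h2
      simp [pdX, pdC, s_hi, hhl, mul_sub, sub_mul, smul_sub, mul_assoc, s_other i h1 h2, h2, o4,
        assoc_neg o1, assoc_neg o2]
    · simp [pdX, pdC, s_other i h1 h2, s_other i h3 h4, h2, h3, h4]

end Derivation

section Operators

variable {F : Type} [Field F] {n : ℕ}

/-- The twisted derivation `D_i` of `PA F n` determined by `T_i a = s_i(a) T_i + D_i(a)`. -/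
noncomputable def pder (ξ : F) (i : Fin (n - 1)) : PA F n →ₗ[F] PA F n where
  toFun a := (isPolyClifford_tri ξ i).lift (F := F) a 0 1
  map_add' a b := by simp
  map_smul' r a := by simp

theorem lift_tri (ξ : F) (i : Fin (n - 1)) (a : PA F n) :
    (isPolyClifford_tri ξ i).lift (F := F) a = tri (pperm (s i) a) (pder ξ i a) a := by
  have key : (isPolyClifford_tri ξ i).lift (F := F) a 0 0 = pperm (s i) a ∧
      (isPolyClifford_tri ξ i).lift (F := F) a 1 0 = 0 ∧
      (isPolyClifford_tri ξ i).lift (F := F) a 1 1 = a := by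
    induction a using PA.induction with
    | hx k => simp [tri]
    | hc k => simp [tri]
    | halg r => simp [Matrix.algebraMap_matrix_apply]
    | hadd a b ha hb => simp [ha, hb]
    | hmul a b ha hb => simp [Matrix.mul_apply, Fin.sum_univ_two, ha, hb]
  obtain ⟨h1, h2, h3⟩ := key
  ext k l
  fin_cases k <;> fin_cases l
  exacts [h1, rfl, h2, h3]

theorem pder_mul (ξ : F) (i : Fin (n - 1)) (a b : PA F n) :
    pder ξ i (a * b) = pperm (s i) a * pder ξ i b + pder ξ i a * b := by
  have h := lift_tri ξ i (a * b)
  rw [map_mul, lift_tri, lift_tri, tri_mul] at h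
  simpa [tri] using (congrFun (congrFun h 0) 1).symm

@[simp] theorem pder_one (ξ : F) (i : Fin (n - 1)) : pder ξ i (1 : PA F n) = 0 := by
  simp [pder]

theorem pder_pc (ξ : F) (i : Fin (n - 1)) (k : Fin n) : pder ξ i (pc F k) = pdC ξ i k := by
  simp [pder, tri]

theorem pder_px (ξ : F) (i : Fin (n - 1)) (k : Fin n) : pder ξ i (px F k) = pdX ξ i k := by
  simp [pder, tri]

@[simp] theorem pder_pc_lo (ξ : F) (i : Fin (n - 1)) : pder ξ i (pc F (lo i)) = 0 := by
  rw [pder_pc, pdC, if_neg (lo_ne_hi i)]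

@[simp] theorem pder_pc_hi (ξ : F) (i : Fin (n - 1)) :
    pder ξ i (pc F (hi i)) = ξ • (pc F (hi i) - pc F (lo i)) := by
  rw [pder_pc, pdC, if_pos rfl]

theorem pder_pc_other (ξ : F) {i : Fin (n - 1)} {k : Fin n} (h : k ≠ hi i) :
    pder ξ i (pc F k) = 0 := by
  rw [pder_pc, pdC, if_neg h]

@[simp] theorem pder_px_lo (ξ : F) (i : Fin (n - 1)) : pder ξ i (px F (lo i)) =
    -(ξ • (px F (hi i) + pc F (lo i) * pc F (hi i) * px F (lo i))) := by
  rw [pder_px, pdX, if_pos rfl]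

@[simp] theorem pder_px_hi (ξ : F) (i : Fin (n - 1)) : pder ξ i (px F (hi i)) =
    ξ • (px F (hi i) - pc F (lo i) * pc F (hi i) * px F (hi i)) := by
  rw [pder_px, pdX, if_neg (lo_ne_hi i).symm, if_pos rfl]

theorem pder_px_other (ξ : F) {i : Fin (n - 1)} {k : Fin n} (h : k ≠ lo i) (h' : k ≠ hi i) :
    pder ξ i (px F k) = 0 := by
  rw [pder_px, pdX, if_neg h, if_neg h']

theorem pder_px'_other (ξ : F) {i : Fin (n - 1)} {k : Fin n} (h : k ≠ lo i) (h' : k ≠ hi i) :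
    pder ξ i (px' F k) = 0 := by
  rw [(isPolyClifford_PA F).inv_eq, pder_mul, pder_mul, pder_px_other ξ h h', pder_pc_other ξ h']
  simp

/-- The underlying space of the regular representation of `H_n`, with basis `T_w` over `PA F n`. -/
abbrev V (F : Type) [Field F] (n : ℕ) : Type := Equiv.Perm (Fin n) → PA F n

/-- Left multiplication by `PA F n` on `V F n`. -/
noncomputable def lmulV : PA F n →ₐ[F] Module.End F (V F n) := Algebra.lsmul F F (V F n)

theorem lmulV_apply (a : PA F n) (v : V F n) (w : Equiv.Perm (Fin n)) :
    lmulV a v w = a * v w := rfl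

/-- The action of `T_i` on `V F n`. -/
noncomputable def opT (ξ : F) (i : Fin (n - 1)) : Module.End F (V F n) where
  toFun v w := pder ξ i (v w) + pperm (s i) (v (s i * w)) +
    if DescL i w then ξ • pperm (s i) (v w) else 0
  map_add' v v' := by
    ext w
    simp only [Pi.add_apply, map_add]
    split_ifs
    · rw [smul_add]; abel
    · abel
  map_smul' r v := by
    ext w
    simp only [Pi.smul_apply, map_smul, RingHom.id_apply, smul_add]
    split_ifs
    · rw [smul_comm]
    · simp

theorem opT_apply (ξ : F) (i : Fin (n - 1)) (v : V F n) (w : Equiv.Perm (Fin n)) :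
    opT ξ i v w = pder ξ i (v w) + pperm (s i) (v (s i * w)) +
      if DescL i w then ξ • pperm (s i) (v w) else 0 := rfl

/-- Right multiplication by `T_j` on `V F n`. -/
noncomputable def opR (ξ : F) (j : Fin (n - 1)) : Module.End F (V F n) where
  toFun v w := v (w * s j) + if DescL j w⁻¹ then ξ • v w else 0
  map_add' v v' := by
    ext w
    simp only [Pi.add_apply]
    split_ifs
    · rw [smul_add]; abel
    · abel
  map_smul' r v := by
    ext w
    simp only [Pi.smul_apply, RingHom.id_apply, smul_add]
    split_ifs
    · rw [smul_comm]
    · simp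

theorem opR_apply (ξ : F) (j : Fin (n - 1)) (v : V F n) (w : Equiv.Perm (Fin n)) :
    opR ξ j v w = v (w * s j) + if DescL j w⁻¹ then ξ • v w else 0 := rfl

theorem opT_mul_lmulV (ξ : F) (i : Fin (n - 1)) (a : PA F n) :
    opT ξ i * lmulV a = lmulV (pperm (s i) a) * opT ξ i + lmulV (pder ξ i a) := by
  refine LinearMap.ext fun v => funext fun w => ?_
  simp only [Module.End.mul_apply, LinearMap.add_apply, Pi.add_apply, opT_apply, lmulV_apply,
    pder_mul, map_mul, mul_add]
  split_ifs
  · rw [mul_smul_comm]; abel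
  · rw [mul_zero]; abel

theorem opR_mul_lmulV (ξ : F) (j : Fin (n - 1)) (a : PA F n) :
    opR ξ j * lmulV a = lmulV a * opR ξ j := by
  refine LinearMap.ext fun v => funext fun w => ?_
  simp only [Module.End.mul_apply, opR_apply, lmulV_apply, mul_add]
  split_ifs
  · rw [mul_smul_comm]
  · rw [mul_zero]

theorem opR_mul_opT (ξ : F) (i j : Fin (n - 1)) :
    opR ξ j * opT ξ i = opT ξ i * opR (n := n) ξ j := by
  refine LinearMap.ext fun v => funext fun w => ?_
  simp only [Module.End.mul_apply, opR_apply, opT_apply, map_add, ← mul_assoc]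
  by_cases h : s i * w = w * s j
  · have e1 := descL_inv_iff_of_comm i j w h
    have e2 : DescL i (w * s j) ↔ ¬DescL i w := by rw [← h, descL_s_mul_self]
    have e3 : DescL j (w * s j)⁻¹ ↔ ¬DescL i w := by
      rw [mul_inv_rev, s_inv, descL_s_mul_self, e1]
    by_cases hd : DescL i w
    · simp only [e1, e2, e3, hd, h, not_true, if_true, if_false, map_smul, smul_add, map_zero]
      abel
    · simp only [e1, e2, e3, hd, h, not_false_iff, if_true, if_false, map_smul, smul_add, map_zero,
        smul_zero]
      abel
  · have e2 := descL_mul_s_iff i j w h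
    have e3 := descL_inv_s_mul_iff i j w h
    by_cases hd : DescL i w <;> by_cases hd' : DescL j w⁻¹ <;>
    · simp only [e2, e3, hd, hd', if_true, if_false, map_smul, smul_add, map_zero,
        smul_zero]
      abel

/-- The basis vector of `V F n` corresponding to `T_w`. -/
noncomputable def delta (F : Type) [Field F] {n : ℕ} (w : Equiv.Perm (Fin n)) : V F n :=
  Pi.single w 1

theorem delta_apply (w v : Equiv.Perm (Fin n)) : delta F w v = if v = w then 1 else 0 := by
  rw [delta, Pi.single_apply]

theorem opT_delta (ξ : F) (i : Fin (n - 1)) (w : Equiv.Perm (Fin n)) :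
    opT ξ i (delta F w) = delta F (s i * w) + if DescL i w then ξ • delta F w else 0 := by
  ext v
  have e : s i * v = w ↔ v = s i * w :=
    ⟨fun h => by rw [← h, s_mul_s_mul], fun h => by rw [h, s_mul_s_mul]⟩
  simp only [opT_apply, Pi.add_apply, delta_apply, e]
  by_cases h : v = w
  · subst h
    have hne : v ≠ s i * v := fun h => by
      have := descL_s_mul_self i v
      rw [← h] at this
      tauto
    by_cases h1 : DescL i v <;> simp [h1, hne, delta_apply]
  · by_cases h1 : DescL i v <;> by_cases h2 : v = s i * w <;> by_cases h3 : DescL i w <;>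
      simp [h, h1, h2, h3, delta_apply] <;> simp_all []

theorem opT_delta_of_not_descL (ξ : F) {i : Fin (n - 1)} {w : Equiv.Perm (Fin n)}
    (h : ¬DescL i w) : opT ξ i (delta F w) = delta F (s i * w) := by
  rw [opT_delta, if_neg h, add_zero]

theorem opR_delta_of_not_descL (ξ : F) {j : Fin (n - 1)} {w : Equiv.Perm (Fin n)}
    (h : ¬DescL j w⁻¹) : opR ξ j (delta F w) = delta F (w * s j) := by
  ext v
  have e : v * s j = w ↔ v = w * s j :=
    ⟨fun h => by rw [← h, mul_s_mul_s], fun h => by rw [h, mul_s_mul_s]⟩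
  simp only [opR_apply, delta_apply, e]
  by_cases h' : v = w
  · subst h'; simp [h]
  · simp [h']

theorem sum_lmulV_delta (v : V F n) : ∑ w, lmulV (v w) (delta F w) = v := by
  ext u
  rw [Finset.sum_apply]
  simp [lmulV_apply, delta_apply]

theorem op_eq_zero {ξ : F} {Q : Module.End F (V F n)} (h1 : Q (delta F 1) = 0)
    (hR : ∀ j, opR ξ j * Q = Q * opR ξ j)
    (hx : ∀ k v, Q v = 0 → Q (lmulV (px F k) v) = 0)
    (hc : ∀ k v, Q v = 0 → Q (lmulV (pc F k) v) = 0) : Q = 0 := by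
  have ha : ∀ (a : PA F n) (v : V F n), Q v = 0 → Q (lmulV a v) = 0 := by
    intro a
    induction a using PA.induction with
    | hx i => exact hx i
    | hc i => exact hc i
    | halg r => intro v hv; simp [Module.algebraMap_end_apply, hv]
    | hadd a b ha hb => intro v hv; simp [ha v hv, hb v hv]
    | hmul a b ha hb => intro v hv; simpa using ha _ (hb v hv)
  have hd : ∀ w : Equiv.Perm (Fin n), Q (delta F w⁻¹) = 0 := by
    intro w
    induction w using perm_induction_left with
    | one => simpa using h1
    | step i w hw ih =>
      rw [mul_inv_rev, s_inv, ← opR_delta_of_not_descL ξ (by simpa using hw),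
        ← Module.End.mul_apply, ← hR, Module.End.mul_apply, ih, map_zero]
  refine LinearMap.ext fun v => ?_
  rw [← sum_lmulV_delta v, map_sum, LinearMap.zero_apply]
  exact Finset.sum_eq_zero fun w _ => ha _ _ (by simpa using hd w⁻¹)

end Operators

section Representation

variable {F : Type} [Field F] {n : ℕ}

theorem commute_opR_opT (ξ : F) (i j : Fin (n - 1)) :
    Commute (opR ξ j) (opT (n := n) ξ i) := opR_mul_opT ξ i j

theorem opT_sq_lmulV (ξ : F) (i : Fin (n - 1)) (a : PA F n)
    (h1 : pder ξ i (pperm (s i) a) + pperm (s i) (pder ξ i a) = ξ • (pperm (s i) a - a))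
    (h2 : pder ξ i (pder ξ i a) = ξ • pder ξ i a) :
    (opT ξ i * opT ξ i - ξ • opT ξ i - 1) * lmulV a =
      lmulV a * (opT ξ i * opT ξ i - ξ • opT ξ i - 1) := by
  have e1 : lmulV (pder ξ i (pperm (s i) a)) =
      ξ • (lmulV (pperm (s i) a) - lmulV a) - lmulV (pperm (s i) (pder ξ i a)) := by
    rw [← map_sub, ← map_smul, ← map_sub, ← h1, add_sub_cancel_right]
  have e2 : lmulV (pder ξ i (pder ξ i a)) = ξ • lmulV (pder ξ i a) := by rw [h2, map_smul]
  have e3 := opT_mul_lmulV ξ i a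
  have e4 := opT_mul_lmulV ξ i (pperm (s i) a)
  have e5 := opT_mul_lmulV ξ i (pder ξ i a)
  rw [pperm_s_s, e1] at e4
  rw [e2] at e5
  simp only [sub_mul, mul_sub, mul_assoc, e3, mul_add, smul_mul_assoc, mul_smul_comm, one_mul, mul_one, e5]
  rw [← mul_assoc, e4]
  simp only [sub_mul, mul_assoc, add_mul, smul_mul_assoc, smul_sub,
    smul_add]
  abel

theorem opT_sq (ξ : F) (i : Fin (n - 1)) :
    opT ξ i * opT ξ i = ξ • opT (n := n) ξ i + 1 := by
  rw [← sub_eq_zero, ← sub_sub]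
  have h := isPolyClifford_PA F (n := n)
  have hlh : lo i ≠ hi i := lo_ne_hi i
  have hhl := hlh.symm
  have c1 := h.c_sq (lo i)
  have c2 := h.c_sq (hi i)
  have c3 := h.c_anti _ _ hhl
  refine op_eq_zero (ξ := ξ) ?_ (fun j => ?_) (fun k v hv => ?_) (fun k v hv => ?_)
  · simp only [LinearMap.sub_apply, Module.End.mul_apply, LinearMap.smul_apply,
      opT_delta_of_not_descL ξ (not_descL_one i), Module.End.one_apply]
    rw [opT_delta, if_pos (by rw [descL_s_mul_self]; exact not_descL_one i)]
    simp
  · have := commute_opR_opT ξ i j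
    exact ((this.mul_right this).sub_right (this.smul_right ξ)).sub_right (Commute.one_right _)
  · rw [← Module.End.mul_apply, opT_sq_lmulV, Module.End.mul_apply, hv, map_zero]
    · rcases lo_hi_cases i k with rfl | rfl | ⟨h1, h2⟩
      · simp [smul_sub, smul_add, c3]
        abel
      · simp [smul_sub, smul_add, c3]
        abel
      · simp [s_other i h1 h2, pder_px_other ξ h1 h2]
    · rcases lo_hi_cases i k with rfl | rfl | ⟨h1, h2⟩
      · simp [pder_mul, mul_add, mul_sub, sub_mul, smul_sub, smul_add, mul_assoc, assoc_neg c3, assoc_one c1, assoc_one c2]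
        abel
      · simp [pder_mul, mul_sub, sub_mul, smul_sub, mul_assoc, assoc_one c1]
      · simp [pder_px_other ξ h1 h2]
  · rw [← Module.End.mul_apply, opT_sq_lmulV, Module.End.mul_apply, hv, map_zero]
    · rcases lo_hi_cases i k with rfl | rfl | ⟨h1, h2⟩
      · simp
      · simp [smul_sub]
      · simp [s_other i h1 h2, pder_pc_other ξ h2]
    · rcases lo_hi_cases i k with rfl | rfl | ⟨h1, h2⟩
      · simp
      · simp
      · simp [pder_pc_other ξ h2]

/-- The operators preserving the kernel of `Q`. -/
def kerStab {W : Type} [AddCommGroup W] [Module F W] (Q : Module.End F W) :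
    Subalgebra F (Module.End F W) where
  carrier := {A | ∀ v, Q v = 0 → Q (A v) = 0}
  mul_mem' ha hb v hv := ha _ (hb v hv)
  add_mem' ha hb v hv := by rw [LinearMap.add_apply, map_add, ha v hv, hb v hv, add_zero]
  algebraMap_mem' r v hv := by rw [Module.algebraMap_end_apply, map_smul, hv, smul_zero]

theorem kerStab_neg {W : Type} [AddCommGroup W] [Module F W] (Q : Module.End F W) :
    kerStab (-Q) = kerStab Q := by
  ext A
  simp [kerStab]

theorem mem_kerStab_of_mul_eq {W : Type} [AddCommGroup W] [Module F W] {Q A A' : Module.End F W}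
    (h : Q * A = A' * Q) : A ∈ kerStab Q := fun v hv => by
  rw [← Module.End.mul_apply, h, Module.End.mul_apply, hv, map_zero]

/-- If `T_j` commutes with `a` and with the coefficients of `T_i a`, then the commutator of
`T_i` and `T_j` is semilinear at `a`. -/
theorem opT_commutator_lmulV (ξ : F) {i j : Fin (n - 1)} {a : PA F n}
    (h1 : pperm (s j) a = a) (h2 : pder ξ j a = 0)
    (h3 : pperm (s j) (pperm (s i) a) = pperm (s i) a) (h4 : pder ξ j (pperm (s i) a) = 0)
    (h5 : pperm (s j) (pder ξ i a) = pder ξ i a) (h6 : pder ξ j (pder ξ i a) = 0) :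
    (opT ξ i * opT ξ j - opT ξ j * opT ξ i) * lmulV a =
      lmulV (pperm (s i) a) * (opT ξ i * opT ξ j - opT ξ j * opT ξ i) := by
  have e1 := opT_mul_lmulV ξ i a
  have e2 := opT_mul_lmulV ξ j a
  have e3 := opT_mul_lmulV ξ j (pperm (s i) a)
  have e4 := opT_mul_lmulV ξ j (pder ξ i a)
  rw [h1, h2, map_zero, add_zero] at e2
  rw [h3, h4, map_zero, add_zero] at e3
  rw [h5, h6, map_zero, add_zero] at e4
  rw [sub_mul, mul_sub, mul_assoc, mul_assoc, e2, e1, mul_add, ← mul_assoc, ← mul_assoc, e1, e3,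
    e4, add_mul, mul_assoc, mul_assoc]
  abel

theorem lmulV_mem_kerStab_commutator (ξ : F) {i j : Fin (n - 1)} (h1 : lo i ≠ lo j)
    (h2 : lo i ≠ hi j) (h3 : hi i ≠ lo j) (h4 : hi i ≠ hi j) {k : Fin n} (h5 : k ≠ lo j)
    (h6 : k ≠ hi j) :
    lmulV (px F k) ∈ kerStab (opT ξ i * opT ξ j - opT ξ j * opT ξ i) ∧
      lmulV (pc F k) ∈ kerStab (opT ξ i * opT ξ j - opT ξ j * opT ξ i) := by
  constructor <;>
  · refine mem_kerStab_of_mul_eq (opT_commutator_lmulV ξ ?_ ?_ ?_ ?_ ?_ ?_) <;>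
    rcases lo_hi_cases i k with rfl | rfl | ⟨h7, h8⟩ <;>
    simp [s_other, pder_px_other, pder_pc_other, pder_mul, *]

theorem opT_far (ξ : F) {i j : Fin (n - 1)} (hij : i.val + 1 < j.val) :
    opT ξ i * opT ξ j = opT ξ j * opT (n := n) ξ i := by
  rw [← sub_eq_zero]
  have h1 : lo i ≠ lo j := by simp only [ne_eq, Fin.ext_iff, lo_val]; omega
  have h2 : lo i ≠ hi j := by simp only [ne_eq, Fin.ext_iff, lo_val, hi_val]; omega
  have h3 : hi i ≠ lo j := by simp only [ne_eq, Fin.ext_iff, lo_val, hi_val]; omega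
  have h4 : hi i ≠ hi j := by simp only [ne_eq, Fin.ext_iff, hi_val]; omega
  have hmem : ∀ k, lmulV (px F k) ∈ kerStab (opT ξ i * opT ξ j - opT ξ j * opT ξ i) ∧
      lmulV (pc F k) ∈ kerStab (opT ξ i * opT ξ j - opT ξ j * opT ξ i) := by
    intro k
    by_cases hk : k ≠ lo j ∧ k ≠ hi j
    · exact lmulV_mem_kerStab_commutator ξ h1 h2 h3 h4 hk.1 hk.2
    · have hk' : k ≠ lo i ∧ k ≠ hi i := by
        constructor <;> rintro rfl <;> tauto
      have := lmulV_mem_kerStab_commutator (F := F) ξ h1.symm h3.symm h2.symm h4.symm hk'.1 hk'.2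
      have e : kerStab (opT (n := n) ξ j * opT ξ i - opT ξ i * opT ξ j) =
          kerStab (opT ξ i * opT ξ j - opT ξ j * opT ξ i) := by
        rw [← neg_sub (opT ξ i * opT ξ j), kerStab_neg]
      rwa [e] at this
  refine op_eq_zero (ξ := ξ) ?_ (fun l => ?_) (fun k v hv => (hmem k).1 v hv)
    (fun k v hv => (hmem k).2 v hv)
  · have d1 : ¬DescL i (s j * 1 : Equiv.Perm (Fin n)) := by
      rw [descL_s_mul, s_other j h3 h4, s_other j h1 h2]
      exact not_descL_one i
    have d2 : ¬DescL j (s i * 1 : Equiv.Perm (Fin n)) := by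
      rw [descL_s_mul, s_other i h2.symm h4.symm, s_other i h1.symm h3.symm]
      exact not_descL_one j
    have hs : s i * s j = s j * s i := by
      refine Equiv.ext fun k => ?_
      simp only [Equiv.Perm.mul_apply, Fin.ext_iff, s_val]
      split_ifs <;> omega
    rw [LinearMap.sub_apply, Module.End.mul_apply, Module.End.mul_apply,
      opT_delta_of_not_descL ξ (not_descL_one i), opT_delta_of_not_descL ξ (not_descL_one j),
      opT_delta_of_not_descL ξ d1, opT_delta_of_not_descL ξ d2, mul_one, mul_one, hs, sub_self]
  · have hi := commute_opR_opT ξ i l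
    have hj := commute_opR_opT ξ j l
    exact (hi.mul_right hj).sub_right (hj.mul_right hi)

/-- The braid defect intertwines `X_1` with `X_3`. -/
theorem braid_mul_x {R : Type} [Ring R] [Algebra F R] (ξ : F) {t u c1 c2 c3 x1 x2 x3 : R}
    (tt : t * t = ξ • t + 1) (uu : u * u = ξ • u + 1) (tc1 : t * c1 = c2 * t)
    (tc2 : t * c2 = c1 * t + ξ • (c2 - c1)) (tc3 : t * c3 = c3 * t) (uc1 : u * c1 = c1 * u)
    (uc2 : u * c2 = c3 * u) (tx1 : t * x1 = x2 * t - ξ • (x2 + c1 * c2 * x1))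
    (tx2 : t * x2 = x1 * t + ξ • (x2 - c1 * c2 * x2)) (tx3 : t * x3 = x3 * t)
    (ux1 : u * x1 = x1 * u) (ux2 : u * x2 = x3 * u - ξ • (x3 + c2 * c3 * x2))
    (c11 : c1 * c1 = 1) (c22 : c2 * c2 = 1) (c21 : c2 * c1 = -(c1 * c2)) (c32 : c3 * c2 = -(c2 * c3))
    (c31 : c3 * c1 = -(c1 * c3)) :
    (t * u * t - u * t * u) * x1 = x3 * (t * u * t - u * t * u) := by
  have atx1 : ∀ z, t * (x1 * z) = x2 * (t * z) - ξ • (x2 * z + c1 * (c2 * (x1 * z))) := fun z => by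
    rw [← mul_assoc, tx1]; simp only [sub_mul, smul_mul_assoc, add_mul, mul_assoc]
  have atx2 : ∀ z, t * (x2 * z) = x1 * (t * z) + ξ • (x2 * z - c1 * (c2 * (x2 * z))) := fun z => by
    rw [← mul_assoc, tx2]; simp only [sub_mul, smul_mul_assoc, add_mul, mul_assoc]
  have aux2 : ∀ z, u * (x2 * z) = x3 * (u * z) - ξ • (x3 * z + c2 * (c3 * (x2 * z))) := fun z => by
    rw [← mul_assoc, ux2]; simp only [sub_mul, smul_mul_assoc, add_mul, mul_assoc]
  have atc2 : ∀ z, t * (c2 * z) = c1 * (t * z) + ξ • (c2 * z - c1 * z) := fun z => by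
    rw [← mul_assoc, tc2]; simp only [sub_mul, smul_mul_assoc, add_mul, mul_assoc]
  have att : ∀ z, t * (t * z) = ξ • (t * z) + z := fun z => by
    rw [← mul_assoc, tt]; simp only [smul_mul_assoc, add_mul, one_mul]
  simp only [mul_assoc, sub_mul, mul_sub, tx1, tx2, tx3, ux1, ux2, assoc_mul tx3, assoc_mul ux1,
    tt, uu, assoc_mul tc1, assoc_mul tc3, assoc_mul uc1, assoc_mul uc2,
    atx1, atx2, aux2, atc2, assoc_one c11, assoc_one c22, assoc_neg c21, assoc_neg c32,
    assoc_neg c31, mul_add, smul_add, smul_sub, mul_smul_comm, mul_neg,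
    smul_neg, mul_one]
  abel

theorem braid_mul_left {R : Type} [Ring R] [Algebra F R] (ξ : F) {t u : R}
    (tt : t * t = ξ • t + 1) (uu : u * u = ξ • u + 1) :
    (t * u * t - u * t * u) * t = (algebraMap F R ξ - u) * (t * u * t - u * t * u) := by
  have att : ∀ z, t * (t * z) = ξ • (t * z) + z := fun z => by
    rw [← mul_assoc, tt]; simp only [smul_mul_assoc, add_mul, one_mul]
  have auu : ∀ z, u * (u * z) = ξ • (u * z) + z := fun z => by
    rw [← mul_assoc, uu]; simp only [smul_mul_assoc, add_mul, one_mul]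
  simp only [sub_mul, mul_sub, mul_assoc, tt, auu, mul_add, mul_smul_comm, mul_one,
    ← Algebra.smul_def]
  abel

theorem mul_sub_algebraMap {R : Type} [Ring R] [Algebra F R] {ξ : F} {t : R}
    (tt : t * t = ξ • t + 1) : t * (t - algebraMap F R ξ) = 1 := by
  rw [mul_sub, tt, ← Algebra.commutes, ← Algebra.smul_def, add_sub_cancel_left]

theorem braid_mul_right {R : Type} [Ring R] [Algebra F R] (ξ : F) {t u : R}
    (tt : t * t = ξ • t + 1) (uu : u * u = ξ • u + 1) :
    (t * u * t - u * t * u) * u = (algebraMap F R ξ - t) * (t * u * t - u * t * u) := by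
  have := braid_mul_left ξ uu tt
  rwa [← neg_sub (t * u * t), neg_mul, mul_neg, neg_inj] at this

theorem adjacent {i j : Fin (n - 1)} (hij : j.val = i.val + 1) :
    lo j = hi i ∧ lo i ≠ hi i ∧ lo i ≠ hi j ∧ hi i ≠ hi j := by
  have hm : lo j = hi i := by rw [Fin.ext_iff, lo_val, hi_val, hij]
  refine ⟨hm, lo_ne_hi i, ?_, hm ▸ lo_ne_hi j⟩
  simp only [ne_eq, Fin.ext_iff, lo_val, hi_val]
  omega

/-- The relation between `T_i` and the polynomial-Clifford algebra. -/
def Twists {R : Type} [Ring R] [Algebra F R] (l : PA F n →ₐ[F] R) (ξ : F) (i : Fin (n - 1))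
    (t : R) : Prop :=
  ∀ a, t * l a = l (pperm (s i) a) * t + l (pder ξ i a)

namespace Twists

variable {R : Type} [Ring R] [Algebra F R] {l : PA F n →ₐ[F] R} {ξ : F} {i : Fin (n - 1)} {t : R}

theorem c_lo (h : Twists l ξ i t) : t * l (pc F (lo i)) = l (pc F (hi i)) * t := by
  rw [h, pperm_pc, s_lo, pder_pc_lo, map_zero, add_zero]

theorem c_hi (h : Twists l ξ i t) :
    t * l (pc F (hi i)) = l (pc F (lo i)) * t + ξ • (l (pc F (hi i)) - l (pc F (lo i))) := by
  rw [h, pperm_pc, s_hi, pder_pc_hi, map_smul, map_sub]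

theorem c_other (h : Twists l ξ i t) {k : Fin n} (h1 : k ≠ lo i) (h2 : k ≠ hi i) :
    t * l (pc F k) = l (pc F k) * t := by
  rw [h, pperm_pc, s_other i h1 h2, pder_pc_other ξ h2, map_zero, add_zero]

theorem x_lo (h : Twists l ξ i t) : t * l (px F (lo i)) = l (px F (hi i)) * t -
    ξ • (l (px F (hi i)) + l (pc F (lo i)) * l (pc F (hi i)) * l (px F (lo i))) := by
  rw [h, pperm_px, s_lo, pder_px_lo, map_neg, map_smul, map_add, map_mul, map_mul, sub_eq_add_neg]

theorem x_hi (h : Twists l ξ i t) : t * l (px F (hi i)) = l (px F (lo i)) * t +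
    ξ • (l (px F (hi i)) - l (pc F (lo i)) * l (pc F (hi i)) * l (px F (hi i))) := by
  rw [h, pperm_px, s_hi, pder_px_hi, map_smul, map_sub, map_mul, map_mul]

theorem x_other (h : Twists l ξ i t) {k : Fin n} (h1 : k ≠ lo i) (h2 : k ≠ hi i) :
    t * l (px F k) = l (px F k) * t := by
  rw [h, pperm_px, s_other i h1 h2, pder_px_other ξ h1 h2, map_zero, add_zero]

theorem x'_other (h : Twists l ξ i t) {k : Fin n} (h1 : k ≠ lo i) (h2 : k ≠ hi i) :
    t * l (px' F k) = l (px' F k) * t := by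
  rw [h, pperm_px', s_other i h1 h2, pder_px'_other ξ h1 h2, map_zero, add_zero]

theorem x_hi_eq (h : Twists l ξ i t) (tt : t * t = ξ • t + 1) :
    (t + ξ • (l (pc F (lo i)) * l (pc F (hi i)))) * l (px F (lo i)) * t = l (px F (hi i)) := by
  rw [add_mul, h.x_lo]
  simp only [smul_add, sub_mul, add_mul, mul_assoc, smul_mul_assoc, tt, mul_add, mul_smul_comm,
    mul_one]
  abel

theorem c_hi_eq (h : Twists l ξ i t) (tt : t * t = ξ • t + 1) :
    t * l (pc F (lo i)) * (t - algebraMap F R ξ) = l (pc F (hi i)) := by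
  rw [h.c_lo, mul_assoc, mul_sub_algebraMap tt, mul_one]

theorem hi_mem (h : Twists l ξ i t) (tt : t * t = ξ • t + 1) {S : Subalgebra F R} (ht : t ∈ S)
    (hx : l (px F (lo i)) ∈ S) (hc : l (pc F (lo i)) ∈ S) :
    l (px F (hi i)) ∈ S ∧ l (pc F (hi i)) ∈ S := by
  have hmem : l (pc F (hi i)) ∈ S := by
    rw [← h.c_hi_eq tt]
    exact mul_mem (mul_mem ht hc) (sub_mem ht (Subalgebra.algebraMap_mem _ _))
  refine ⟨?_, hmem⟩
  rw [← h.x_hi_eq tt]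
  exact mul_mem (mul_mem (add_mem ht (Subalgebra.smul_mem _ (mul_mem hc hmem) _)) hx) ht

theorem braid_c {j : Fin (n - 1)} {u : R} (h : Twists l ξ i t) (h' : Twists l ξ j u)
    (hij : j.val = i.val + 1) :
    (t * u * t - u * t * u) * l (pc F (lo i)) = l (pc F (hi j)) * (t * u * t - u * t * u) := by
  obtain ⟨hm, n12, n13, n23⟩ := adjacent hij
  have tc1 := h.c_lo
  have tc3 := h.c_other n13.symm n23.symm
  have uc1 := h'.c_other (hm ▸ n12) n13
  have uc2 := h'.c_lo
  rw [hm] at uc2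
  simp only [sub_mul, mul_sub, mul_assoc, tc1, uc1, assoc_mul tc1, assoc_mul uc2, assoc_mul tc3]

theorem braid_x {j : Fin (n - 1)} {u : R} (h : Twists l ξ i t) (h' : Twists l ξ j u)
    (hij : j.val = i.val + 1) (tt : t * t = ξ • t + 1) (uu : u * u = ξ • u + 1) :
    (t * u * t - u * t * u) * l (px F (lo i)) = l (px F (hi j)) * (t * u * t - u * t * u) := by
  obtain ⟨hm, n12, n13, n23⟩ := adjacent hij
  have hP := isPolyClifford_PA F (n := n)
  have uc2 := h'.c_lo
  have ux2 := h'.x_lo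
  rw [hm] at uc2 ux2
  refine braid_mul_x ξ tt uu h.c_lo h.c_hi (h.c_other n13.symm n23.symm)
    (h'.c_other (hm ▸ n12) n13) uc2 h.x_lo h.x_hi (h.x_other n13.symm n23.symm)
    (h'.x_other (hm ▸ n12) n13) ux2 ?_ ?_ ?_ ?_ ?_
  · rw [← map_mul, hP.c_sq, map_one]
  · rw [← map_mul, hP.c_sq, map_one]
  · rw [← map_mul, hP.c_anti _ _ n12.symm, map_neg, map_mul]
  · rw [← map_mul, hP.c_anti _ _ n23.symm, map_neg, map_mul]
  · rw [← map_mul, hP.c_anti _ _ n13.symm, map_neg, map_mul]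

end Twists

end Representation

section Braid

variable {F : Type} [Field F] {n : ℕ}

theorem s_braid {i j : Fin (n - 1)} (hij : j.val = i.val + 1) :
    s i * (s j * s i) = s j * (s i * s j) := by
  obtain ⟨hm, n12, n13, n23⟩ := adjacent hij
  rw [← mul_assoc, ← mul_assoc, s, s, hm, Equiv.swap_mul_swap_mul_swap n12 n13,
    Equiv.swap_comm (lo i), Equiv.swap_comm (hi i) (hi j),
    Equiv.swap_mul_swap_mul_swap n23.symm n13.symm]
  exact Equiv.swap_comm _ _

theorem braid_not_descL {i j : Fin (n - 1)} (hij : j.val = i.val + 1) :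
    (¬DescL j (s i * 1 : Equiv.Perm (Fin n)) ∧ ¬DescL i (s j * 1 : Equiv.Perm (Fin n))) ∧
      ¬DescL i (s j * (s i * 1) : Equiv.Perm (Fin n)) ∧
        ¬DescL j (s i * (s j * 1) : Equiv.Perm (Fin n)) := by
  obtain ⟨hm, n12, n13, n23⟩ := adjacent hij
  have h1 : s j (lo i) = lo i := s_other j (hm ▸ n12) n13
  have h2 : s i (hi j) = hi j := s_other i n13.symm n23.symm
  have h3 : s j (hi i) = hi j := by rw [← hm, s_lo]
  have h4 : s i (lo j) = lo i := by rw [hm, s_hi]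
  have l12 := lo_lt_hi i
  have l23 := lo_lt_hi j
  simp only [descL_s_mul, inv_one, mul_inv_rev, s_inv, Equiv.Perm.mul_apply,
    Equiv.Perm.one_apply, h1, h2, h3, h4, s_hi, s_lo, not_lt]
  exact ⟨⟨(l12.trans (hm ▸ l23)).le, (l12.trans (hm ▸ l23)).le⟩, (hm ▸ l23).le, (hm ▸ l12).le⟩

theorem opT_braid_delta_one (ξ : F) {i j : Fin (n - 1)} (hij : j.val = i.val + 1) :
    (opT ξ i * opT ξ j * opT ξ i - opT ξ j * opT ξ i * opT (n := n) ξ j) (delta F 1) = 0 := by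
  obtain ⟨⟨d1, d2⟩, d3, d4⟩ := braid_not_descL hij
  rw [LinearMap.sub_apply, Module.End.mul_apply, Module.End.mul_apply, Module.End.mul_apply,
    Module.End.mul_apply, opT_delta_of_not_descL ξ (not_descL_one i),
    opT_delta_of_not_descL ξ (not_descL_one j), opT_delta_of_not_descL ξ d1,
    opT_delta_of_not_descL ξ d2, opT_delta_of_not_descL ξ d3, opT_delta_of_not_descL ξ d4,
    mul_one, mul_one, s_braid hij, sub_self]

theorem braid_mul_of_commute {R : Type} [Ring R] {t u a : R} (ta : t * a = a * t)
    (ua : u * a = a * u) : (t * u * t - u * t * u) * a = a * (t * u * t - u * t * u) := by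
  simp only [sub_mul, mul_sub, mul_assoc, ta, ua, assoc_mul ta, assoc_mul ua]

theorem twists_opT (ξ : F) (i : Fin (n - 1)) :
    Twists (R := Module.End F (V F n)) lmulV ξ i (opT ξ i) :=
  opT_mul_lmulV ξ i

theorem opT_braid (ξ : F) {i j : Fin (n - 1)} (hij : j.val = i.val + 1) :
    opT ξ i * opT ξ j * opT ξ i = opT ξ j * opT ξ i * opT (n := n) ξ j := by
  rw [← sub_eq_zero]
  obtain ⟨hm, n12, n13, n23⟩ := adjacent hij
  have tt := opT_sq (n := n) ξ i
  have uu := opT_sq (n := n) ξ j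
  have ti := twists_opT (n := n) ξ i
  have tj := twists_opT (n := n) ξ j
  have ht := mem_kerStab_of_mul_eq (braid_mul_left ξ tt uu)
  have hu := mem_kerStab_of_mul_eq (braid_mul_right ξ tt uu)
  have h1x := mem_kerStab_of_mul_eq (ti.braid_x tj hij tt uu)
  have h1c := mem_kerStab_of_mul_eq (ti.braid_c tj hij)
  have h2 := ti.hi_mem tt ht h1x h1c
  have h3 := tj.hi_mem uu hu (hm ▸ h2.1) (hm ▸ h2.2)
  have hmem : ∀ k, lmulV (px F k) ∈ kerStab (opT ξ i * opT ξ j * opT ξ i -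
      opT ξ j * opT ξ i * opT ξ j) ∧ lmulV (pc F k) ∈ kerStab (opT ξ i * opT ξ j * opT ξ i -
      opT ξ j * opT ξ i * opT ξ j) := by
    intro k
    by_cases k1 : k = lo i
    · subst k1; exact ⟨h1x, h1c⟩
    by_cases k2 : k = hi i
    · subst k2; exact h2
    by_cases k3 : k = hi j
    · subst k3; exact h3
    have k2' : k ≠ lo j := hm ▸ k2
    exact ⟨mem_kerStab_of_mul_eq
        (braid_mul_of_commute (ti.x_other k1 k2) (tj.x_other k2' k3)),
      mem_kerStab_of_mul_eq (braid_mul_of_commute (ti.c_other k1 k2) (tj.c_other k2' k3))⟩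
  refine op_eq_zero (ξ := ξ) (opT_braid_delta_one ξ hij) (fun l => ?_)
    (fun k v hv => (hmem k).1 v hv) (fun k v hv => (hmem k).2 v hv)
  have hi := commute_opR_opT ξ i l
  have hj := commute_opR_opT ξ j l
  exact ((hi.mul_right hj).mul_right hi).sub_right ((hj.mul_right hi).mul_right hj)

end Braid

section Basis

variable {F : Type} [Field F] {q : F} {n : ℕ}

theorem isPolyClifford_lmulV : IsPolyClifford (B := Module.End F (V F n))
    (fun i => lmulV (px F i)) (fun i => lmulV (px' F i)) (fun i => lmulV (pc F i)) := by
  have h := isPolyClifford_PA F (n := n)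
  constructor
  · intro i; rw [← map_mul, h.x_x', map_one]
  · intro i; rw [← map_mul, h.x'_x, map_one]
  · intro i j; rw [← map_mul, h.x_comm, map_mul]
  · intro i; rw [← map_mul, h.c_sq, map_one]
  · intro i j hij; rw [← map_mul, h.c_anti _ _ hij, map_neg, map_mul]
  · intro i; rw [← map_mul, h.c_x, map_mul]
  · intro i j hij; rw [← map_mul, h.c_x_comm _ _ hij, map_mul]

/-- The action of the generators of `H_n` on `V`. -/
noncomputable def repGen (ξ : F) : Gen n → Module.End F (V F n)
  | Gen.X i => lmulV (px F i)
  | Gen.Xinv i => lmulV (px' F i)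
  | Gen.C i => lmulV (pc F i)
  | Gen.T i => opT ξ i

/-- The representation of `H_n` on `V`, a model of the left regular representation. -/
noncomputable def rep (q : F) (n : ℕ) : H F q n →ₐ[F] Module.End F (V F n) :=
  RingQuot.liftAlgHom F ⟨FreeAlgebra.lift F (repGen (q - q⁻¹)), by
    have hP := isPolyClifford_lmulV (F := F) (n := n)
    intro a b hab
    cases hab <;>
      simp only [fx, fxinv, fc, ft, map_add, map_neg, map_smul, map_mul, map_one,
        FreeAlgebra.lift_ι_apply, repGen]
    · exact hP.x_x' _
    · exact hP.x'_x _
    · exact hP.x_comm _ _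
    · exact hP.x'_comm _ _
    · exact hP.x_x'_comm _ _
    · exact hP.c_sq _
    · exact hP.c_anti _ _ ‹_›
    · exact hP.c_x _
    · exact (hP.x_c _).symm
    · exact hP.c_x_comm _ _ ‹_›
    · exact (hP.x'_c_comm (Ne.symm ‹_›)).symm
    · exact opT_sq _ _
    · exact opT_braid _ ‹_›
    · exact opT_far _ ‹_›
    · exact (twists_opT _ _).c_lo
    · exact (twists_opT _ _).c_other ‹_› ‹_›
    · exact (twists_opT _ _).x_other ‹_› ‹_›
    · exact (twists_opT _ _).x'_other ‹_› ‹_›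
    · exact (twists_opT _ _).x_hi_eq (opT_sq _ _)⟩

theorem rep_X (i : Fin n) : rep q n (X F q i) = lmulV (px F i) := by
  rw [rep, X, RingQuot.liftAlgHom_mkAlgHom_apply, fx, FreeAlgebra.lift_ι_apply, repGen]

theorem rep_Xinv (i : Fin n) : rep q n (Xinv F q i) = lmulV (px' F i) := by
  rw [rep, Xinv, RingQuot.liftAlgHom_mkAlgHom_apply, fxinv, FreeAlgebra.lift_ι_apply, repGen]

theorem rep_C (i : Fin n) : rep q n (C F q i) = lmulV (pc F i) := by
  rw [rep, C, RingQuot.liftAlgHom_mkAlgHom_apply, fc, FreeAlgebra.lift_ι_apply, repGen]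

theorem rep_T (i : Fin (n - 1)) : rep q n (T F q i) = opT (q - q⁻¹) i := by
  rw [rep, T, RingQuot.liftAlgHom_mkAlgHom_apply, ft, FreeAlgebra.lift_ι_apply, repGen]

end Basis

section StandardBasis

variable {F : Type} [Field F] {n : ℕ}

/-- The relations of `H_n` in terms of a homomorphism `l` from the polynomial-Clifford algebra
and elements `t i`. -/
structure IsHecke {R : Type} [Ring R] [Algebra F R] (l : PA F n →ₐ[F] R) (ξ : F)
    (t : Fin (n - 1) → R) : Prop where
  sq : ∀ i, t i * t i = ξ • t i + 1
  braid : ∀ i j, j.val = i.val + 1 → t i * t j * t i = t j * t i * t j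
  far : ∀ i j, i.val + 1 < j.val → t i * t j = t j * t i
  twists : ∀ i, Twists l ξ i (t i)

open Classical in
/-- The element `T_w`, the product of the `t i` along a reduced word of `w`. -/
noncomputable def Tw {R : Type} [Ring R] (t : Fin (n - 1) → R) (w : Equiv.Perm (Fin n)) : R :=
  if h : ∃ i, DescL i w then t h.choose * Tw t (s h.choose * w) else 1
termination_by len w
decreasing_by have := len_s_mul_of_descL h.choose_spec; omega

theorem Tw_one {R : Type} [Ring R] (t : Fin (n - 1) → R) : Tw t 1 = 1 := by
  rw [Tw, dif_neg]
  rintro ⟨i, hi⟩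
  exact not_descL_one i hi

theorem descL_s_mul_far {i j : Fin (n - 1)} (hij : i.val + 1 < j.val ∨ j.val + 1 < i.val)
    (w : Equiv.Perm (Fin n)) : DescL i (s j * w) ↔ DescL i w := by
  rw [descL_s_mul, s_other, s_other, DescL] <;>
    simp only [ne_eq, Fin.ext_iff, lo_val, hi_val] <;> omega

theorem s_far {i j : Fin (n - 1)} (hij : i.val + 1 < j.val) :
    s i * s j = s j * s i := by
  refine Equiv.ext fun k => ?_
  simp only [Equiv.Perm.mul_apply, Fin.ext_iff, s_val]
  split_ifs <;> omega

theorem descL_s_mul_adjacent {i j : Fin (n - 1)} (hij : j.val = i.val + 1)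
    {w : Equiv.Perm (Fin n)} (h1 : DescL i w) (h2 : DescL j w) :
    (DescL j (s i * w) ∧ DescL i (s j * (s i * w))) ∧
      DescL i (s j * w) ∧ DescL j (s i * (s j * w)) := by
  obtain ⟨hm, n12, n13, n23⟩ := adjacent hij
  have e1 : s j (lo i) = lo i := s_other j (hm ▸ n12) n13
  have e2 : s i (hi j) = hi j := s_other i n13.symm n23.symm
  have e3 : s j (hi i) = hi j := by rw [← hm, s_lo]
  have e4 : s i (lo j) = lo i := by rw [hm, s_hi]
  rw [DescL] at h1 h2
  rw [hm] at h2
  simp only [descL_s_mul, mul_inv_rev, s_inv, Equiv.Perm.mul_apply, e1, e2, e3, e4, s_hi, s_lo]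
  exact ⟨⟨h2.trans h1, h2⟩, h2.trans h1, hm ▸ h1⟩

namespace IsHecke

variable {R : Type} [Ring R] [Algebra F R] {l : PA F n →ₐ[F] R} {ξ : F} {t : Fin (n - 1) → R}

theorem t_mul_Tw_eq (h : IsHecke l ξ t) {i j : Fin (n - 1)} (hij : i.val < j.val)
    {w : Equiv.Perm (Fin n)} (h1 : DescL i w) (h2 : DescL j w)
    (ih : ∀ v, len v < len w → ∀ k, DescL k v → Tw t v = t k * Tw t (s k * v)) :
    t i * Tw t (s i * w) = t j * Tw t (s j * w) := by
  have l1 := len_s_mul_of_descL h1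
  have l2 := len_s_mul_of_descL h2
  by_cases hadj : j.val = i.val + 1
  · obtain ⟨⟨d1, d2⟩, d3, d4⟩ := descL_s_mul_adjacent hadj h1 h2
    have l3 := len_s_mul_of_descL d1
    have l4 := len_s_mul_of_descL d3
    have hs : s i * (s j * (s i * w)) = s j * (s i * (s j * w)) := by
      simpa only [mul_assoc] using congrArg (· * w) (s_braid hadj)
    rw [ih _ (by omega) _ d1, ih _ (by omega) _ d2, ih _ (by omega) _ d3, ih _ (by omega) _ d4, hs]
    simpa only [mul_assoc] using
      congrArg (· * Tw t (s j * (s i * (s j * w)))) (h.braid i j hadj)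
  · have d1 := (descL_s_mul_far (i := j) (j := i) (Or.inr (by omega)) w).2 h2
    have d2 := (descL_s_mul_far (i := i) (j := j) (Or.inl (by omega)) w).2 h1
    rw [ih _ (by omega) _ d1, ih _ (by omega) _ d2, ← mul_assoc, h.far i j (by omega),
      mul_assoc, ← mul_assoc (s j), ← s_far (by omega), mul_assoc (s i)]

theorem Tw_of_descL (h : IsHecke l ξ t) {w : Equiv.Perm (Fin n)} {i : Fin (n - 1)}
    (hd : DescL i w) : Tw t w = t i * Tw t (s i * w) := by
  induction hk : len w using Nat.strong_induction_on generalizing w i with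
  | _ k ih =>
    have hex : ∃ i, DescL i w := ⟨i, hd⟩
    rw [Tw, dif_pos hex]
    have ih' : ∀ v, len v < len w → ∀ k, DescL k v → Tw t v = t k * Tw t (s k * v) :=
      fun v hv k hk' => ih _ (hk ▸ hv) hk' rfl
    rcases lt_trichotomy i.val hex.choose.val with hlt | heq | hgt
    · exact (h.t_mul_Tw_eq hlt hd hex.choose_spec ih').symm
    · rw [← Fin.ext heq]
    · exact h.t_mul_Tw_eq hgt hex.choose_spec hd ih'

theorem Tw_s_mul (h : IsHecke l ξ t) {w : Equiv.Perm (Fin n)} {i : Fin (n - 1)}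
    (hd : ¬DescL i w) : Tw t (s i * w) = t i * Tw t w := by
  rw [h.Tw_of_descL ((descL_s_mul_self i w).2 hd), s_mul_s_mul]

theorem t_mul_Tw (h : IsHecke l ξ t) (w : Equiv.Perm (Fin n)) (i : Fin (n - 1)) :
    t i * Tw t w = Tw t (s i * w) + if DescL i w then ξ • Tw t w else 0 := by
  split_ifs with hd
  · rw [h.Tw_of_descL hd, ← mul_assoc, h.sq, add_mul, one_mul, smul_mul_assoc, add_comm]
  · rw [h.Tw_s_mul hd, add_zero]

end IsHecke

/-- The comparison map from the model `V` of the regular representation. -/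
noncomputable def theta {R : Type} [Ring R] [Algebra F R] (l : PA F n →ₐ[F] R)
    (t : Fin (n - 1) → R) : V F n →ₗ[F] R where
  toFun v := ∑ w, l (v w) * Tw t w
  map_add' v v' := by simp only [Pi.add_apply, map_add, add_mul, Finset.sum_add_distrib]
  map_smul' c v := by
    simp only [Pi.smul_apply, map_smul, smul_mul_assoc, Finset.smul_sum, RingHom.id_apply]

section

variable {R : Type} [Ring R] [Algebra F R] {l : PA F n →ₐ[F] R} {ξ : F} {t : Fin (n - 1) → R}

theorem theta_apply (v : V F n) : theta l t v = ∑ w, l (v w) * Tw t w := rfl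

theorem theta_lmulV (a : PA F n) (v : V F n) : theta l t (lmulV a v) = l a * theta l t v := by
  simp only [theta_apply, lmulV_apply, map_mul, Finset.mul_sum, mul_assoc]

theorem theta_delta (w : Equiv.Perm (Fin n)) : theta l t (delta F w) = Tw t w := by
  rw [theta_apply, Finset.sum_eq_single w]
  · rw [delta_apply, if_pos rfl, map_one, one_mul]
  · intro v _ hv
    rw [delta_apply, if_neg hv, map_zero, zero_mul]
  · exact fun hw => absurd (Finset.mem_univ w) hw

theorem IsHecke.theta_opT (h : IsHecke l ξ t) (i : Fin (n - 1)) (v : V F n) :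
    theta l t (opT ξ i v) = t i * theta l t v := by
  simp only [theta_apply, opT_apply, map_add, add_mul, Finset.sum_add_distrib, Finset.mul_sum]
  have e : ∀ w, t i * (l (v w) * Tw t w) = l (pder ξ i (v w)) * Tw t w +
      l (pperm (s i) (v w)) * Tw t (s i * w) +
        l (if DescL i w then ξ • pperm (s i) (v w) else 0) * Tw t w := by
    intro w
    rw [← mul_assoc, h.twists i, add_mul, mul_assoc, h.t_mul_Tw, mul_add]
    split_ifs
    · rw [map_smul, mul_smul_comm, smul_mul_assoc]; abel
    · rw [map_zero, zero_mul, mul_zero]; abel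
  simp only [e, Finset.sum_add_distrib]
  congr 2
  refine Fintype.sum_equiv (Equiv.mulLeft (s i)) _ _ fun w => ?_
  simp

end

end StandardBasis

section Regular

variable {F : Type} [Field F] {n : ℕ}

theorem mul_c_hi {R : Type} [Ring R] [Algebra F R] {ξ : F} {t c1 c2 : R}
    (tt : t * t = ξ • t + 1) (h : t * c1 = c2 * t) : t * c2 = c1 * t + ξ • (c2 - c1) := by
  have hc : c2 = t * c1 * (t - algebraMap F R ξ) := by
    rw [h, mul_assoc, mul_sub_algebraMap tt, mul_one]
  have : t * c2 = ξ • c2 + (c1 * t - ξ • c1) := by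
    nth_rw 1 [hc]
    rw [← mul_assoc, ← mul_assoc, tt, add_mul, smul_mul_assoc, one_mul, add_mul,
      smul_mul_assoc, ← hc, mul_sub, ← Algebra.commutes, ← Algebra.smul_def]
  rw [this, smul_sub]
  abel

theorem mul_x_lo {R : Type} [Ring R] [Algebra F R] {ξ : F} {t c1 c2 x1 x2 : R}
    (tt : t * t = ξ • t + 1) (h : (t + ξ • (c1 * c2)) * x1 * t = x2) :
    t * x1 = x2 * t - ξ • (x2 + c1 * c2 * x1) := by
  have : (t + ξ • (c1 * c2)) * x1 = x2 * (t - algebraMap F R ξ) := by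
    rw [← h, mul_assoc _ t, mul_sub_algebraMap tt, mul_one]
  rw [add_mul, mul_sub, ← Algebra.commutes, ← Algebra.smul_def, smul_mul_assoc] at this
  rw [smul_add, ← sub_sub, ← this]
  abel

theorem mul_x_hi {R : Type} [Ring R] [Algebra F R] {ξ : F} {t c1 c2 x1 x2 : R}
    (tt : t * t = ξ • t + 1) (htc : t * c1 = c2 * t) (c11 : c1 * c1 = 1) (c22 : c2 * c2 = 1)
    (c21 : c2 * c1 = -(c1 * c2)) (h : (t + ξ • (c1 * c2)) * x1 * t = x2) :
    t * x2 = x1 * t + ξ • (x2 - c1 * c2 * x2) := by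
  have htc2 := mul_c_hi tt htc
  have att : ∀ z, t * (t * z) = ξ • (t * z) + z := fun z => by
    rw [← mul_assoc, tt]; simp only [smul_mul_assoc, add_mul, one_mul]
  have atc2 : ∀ z, t * (c2 * z) = c1 * (t * z) + ξ • (c2 * z - c1 * z) := fun z => by
    rw [← mul_assoc, htc2]; simp only [sub_mul, smul_mul_assoc, add_mul, mul_assoc]
  rw [← h]
  simp only [add_mul, mul_add, mul_sub, smul_mul_assoc, mul_smul_comm, mul_assoc, att,
    assoc_mul htc, atc2, assoc_one c11, assoc_one c22, assoc_neg c21, smul_add, smul_sub,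
    smul_neg, mul_neg]
  abel

theorem Twists.of_generators {R : Type} [Ring R] [Algebra F R] {l : PA F n →ₐ[F] R} {ξ : F}
    {i : Fin (n - 1)} {t : R} (tt : t * t = ξ • t + 1)
    (hc : t * l (pc F (lo i)) = l (pc F (hi i)) * t)
    (hco : ∀ k, k ≠ lo i → k ≠ hi i → t * l (pc F k) = l (pc F k) * t)
    (hxo : ∀ k, k ≠ lo i → k ≠ hi i → t * l (px F k) = l (px F k) * t)
    (hx : (t + ξ • (l (pc F (lo i)) * l (pc F (hi i)))) * l (px F (lo i)) * t = l (px F (hi i))) :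
    Twists l ξ i t := by
  have hP := isPolyClifford_PA F (n := n)
  have hsq : ∀ k, l (pc F k) * l (pc F k) = 1 := fun k => by rw [← map_mul, hP.c_sq, map_one]
  have hanti : l (pc F (hi i)) * l (pc F (lo i)) = -(l (pc F (lo i)) * l (pc F (hi i))) := by
    rw [← map_mul, hP.c_anti _ _ (lo_ne_hi i).symm, map_neg, map_mul]
  refine PA.induction (fun k => ?_) (fun k => ?_) (fun r => ?_) (fun a b ha hb => ?_)
    (fun a b ha hb => ?_)
  · by_cases h1 : k = lo i
    · rw [h1, pperm_px, s_lo, pder_px_lo, map_neg, map_smul, map_add, map_mul, map_mul,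
        ← sub_eq_add_neg]
      exact mul_x_lo tt hx
    by_cases h2 : k = hi i
    · rw [h2, pperm_px, s_hi, pder_px_hi, map_smul, map_sub, map_mul, map_mul]
      exact mul_x_hi tt hc (hsq _) (hsq _) hanti hx
    · rw [pperm_px, s_other i h1 h2, pder_px_other ξ h1 h2, map_zero, add_zero]
      exact hxo k h1 h2
  · by_cases h1 : k = lo i
    · rw [h1, pperm_pc, s_lo, pder_pc_lo, map_zero, add_zero]
      exact hc
    by_cases h2 : k = hi i
    · rw [h2, pperm_pc, s_hi, pder_pc_hi, map_smul, map_sub]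
      exact mul_c_hi tt hc
    · rw [pperm_pc, s_other i h1 h2, pder_pc_other ξ h2, map_zero, add_zero]
      exact hco k h1 h2
  · have : pder ξ i (algebraMap F (PA F n) r) = 0 := by
      rw [Algebra.algebraMap_eq_smul_one, map_smul, pder_one, smul_zero]
    rw [this, AlgHom.commutes, AlgHom.commutes, AlgHom.commutes, ← Algebra.commutes, map_zero,
      add_zero]
  · rw [map_add, mul_add, ha, hb, map_add, map_add, map_add, map_add, add_mul]
    abel
  · rw [map_mul, ← mul_assoc, ha, add_mul, mul_assoc, hb, pder_mul, map_add, map_mul, map_mul,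
      map_mul, map_mul, mul_add]
    simp only [mul_assoc, add_assoc]

variable {q : F}

theorem isPolyClifford_H : IsPolyClifford (B := H F q n) (X F q) (Xinv F q) (C F q) where
  x_x' i := by
    simpa only [X, Xinv, C, T, map_mul, map_one] using
      RingQuot.mkAlgHom_rel F (Rel.XXinv (q := q) i)
  x'_x i := by
    simpa only [X, Xinv, C, T, map_mul, map_one] using
      RingQuot.mkAlgHom_rel F (Rel.XinvX (q := q) i)
  x_comm i j := by
    simpa only [X, Xinv, C, T, map_mul] using
      RingQuot.mkAlgHom_rel F (Rel.XX (q := q) i j)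
  c_sq i := by
    simpa only [X, Xinv, C, T, map_mul, map_one] using
      RingQuot.mkAlgHom_rel F (Rel.CC (q := q) i)
  c_anti i j hij := by
    simpa only [X, Xinv, C, T, map_mul, map_neg] using
      RingQuot.mkAlgHom_rel F (Rel.Canti (q := q) i j hij)
  c_x i := by
    simpa only [X, Xinv, C, T, map_mul] using
      RingQuot.mkAlgHom_rel F (Rel.CX (q := q) i)
  c_x_comm i j hij := by
    simpa only [X, Xinv, C, T, map_mul] using
      RingQuot.mkAlgHom_rel F (Rel.CXo (q := q) i j hij)

/-- The inclusion of the polynomial-Clifford algebra into `H_n`. -/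
noncomputable def iA (q : F) (n : ℕ) : PA F n →ₐ[F] H F q n := isPolyClifford_H.lift

@[simp] theorem iA_px (i : Fin n) : iA q n (px F i) = X F q i :=
  isPolyClifford_H.lift_px i

@[simp] theorem iA_px' (i : Fin n) : iA q n (px' F i) = Xinv F q i :=
  isPolyClifford_H.lift_px' i

@[simp] theorem iA_pc (i : Fin n) : iA q n (pc F i) = C F q i :=
  isPolyClifford_H.lift_pc i

theorem T_sq (i : Fin (n - 1)) : T F q i * T F q i = (q - q⁻¹) • T F q i + 1 := by
  simpa only [X, Xinv, C, T, map_mul, map_one, map_add, map_smul] using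
      RingQuot.mkAlgHom_rel F (Rel.Tquad (q := q) i)

theorem isHecke_H : IsHecke (iA q n) (q - q⁻¹) (T F q) where
  sq := T_sq
  braid i j h := by
    simpa only [X, Xinv, C, T, map_mul] using
      RingQuot.mkAlgHom_rel F (Rel.Tbraid (q := q) i j h)
  far i j h := by
    simpa only [X, Xinv, C, T, map_mul] using
      RingQuot.mkAlgHom_rel F (Rel.TTfar (q := q) i j h)
  twists i := by
    refine Twists.of_generators (T_sq i) ?_ (fun k h1 h2 => ?_) (fun k h1 h2 => ?_) ?_
    · simpa only [X, Xinv, C, T, map_mul, iA_pc] using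
        RingQuot.mkAlgHom_rel F (Rel.TC (q := q) i)
    · simpa only [X, Xinv, C, T, map_mul, iA_pc] using
        RingQuot.mkAlgHom_rel F (Rel.TCo (q := q) i k h1 h2)
    · simpa only [X, Xinv, C, T, map_mul, iA_px] using
        RingQuot.mkAlgHom_rel F (Rel.TXo (q := q) i k h1 h2)
    · simpa only [X, Xinv, C, T, map_mul, map_add, map_smul, iA_pc, iA_px] using
        RingQuot.mkAlgHom_rel F (Rel.cross (q := q) i)

theorem H.induction {p : H F q n → Prop} (hx : ∀ i, p (X F q i)) (hx' : ∀ i, p (Xinv F q i))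
    (hc : ∀ i, p (C F q i)) (ht : ∀ i, p (T F q i)) (halg : ∀ r : F, p (algebraMap F _ r))
    (hadd : ∀ a b, p a → p b → p (a + b)) (hmul : ∀ a b, p a → p b → p (a * b)) (a : H F q n) :
    p a := by
  obtain ⟨a, rfl⟩ := RingQuot.mkAlgHom_surjective F (Rel F q n) a
  induction a using FreeAlgebra.induction with
  | grade0 r => simpa only [AlgHom.commutes] using halg r
  | grade1 g =>
    cases g with
    | X i => exact hx i
    | Xinv i => exact hx' i
    | C i => exact hc i
    | T i => exact ht i
  | mul a b ha hb => simpa only [map_mul] using hmul _ _ ha hb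
  | add a b ha hb => simpa only [map_add] using hadd _ _ ha hb

theorem rep_iA (a : PA F n) : rep q n (iA q n a) = lmulV a := by
  have : (rep q n).comp (iA q n) = lmulV := by
    refine PA.algHom_ext (fun i => ?_) (fun i => ?_)
    · rw [AlgHom.comp_apply, iA_px, rep_X]
    · rw [AlgHom.comp_apply, iA_pc, rep_C]
  exact DFunLike.congr_fun this a

theorem theta_rep (h : H F q n) (v : V F n) :
    theta (iA q n) (T F q) (rep q n h v) = h * theta (iA q n) (T F q) v := by
  induction h using H.induction generalizing v with
  | hx i => rw [rep_X, theta_lmulV, iA_px]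
  | hx' i => rw [rep_Xinv, theta_lmulV, iA_px']
  | hc i => rw [rep_C, theta_lmulV, iA_pc]
  | ht i => rw [rep_T, isHecke_H.theta_opT]
  | halg r => rw [AlgHom.commutes, Module.algebraMap_end_apply, map_smul, ← Algebra.smul_def]
  | hadd a b ha hb => rw [map_add, LinearMap.add_apply, map_add, ha, hb, add_mul]
  | hmul a b ha hb => rw [map_mul, Module.End.mul_apply, ha, hb, mul_assoc]

/-- The coefficients of `h` in the basis `T_w` of `H_n` as a left module over the
polynomial-Clifford algebra. -/
noncomputable def cf (q : F) (n : ℕ) : H F q n →ₗ[F] V F n where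
  toFun h := rep q n h (delta F 1)
  map_add' a b := by rw [map_add, LinearMap.add_apply]
  map_smul' c a := by rw [map_smul, LinearMap.smul_apply, RingHom.id_apply]

theorem cf_apply (h : H F q n) : cf q n h = rep q n h (delta F 1) := rfl

theorem cf_mul (a b : H F q n) : cf q n (a * b) = rep q n a (cf q n b) := by
  rw [cf_apply, cf_apply, map_mul, Module.End.mul_apply]

theorem theta_cf (h : H F q n) : theta (iA q n) (T F q) (cf q n h) = h := by
  rw [cf_apply, theta_rep, theta_delta, Tw_one, mul_one]

theorem cf_Tw (w : Equiv.Perm (Fin n)) : cf q n (Tw (T F q) w) = delta F w := by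
  induction w using perm_induction_left with
  | one => rw [Tw_one, cf_apply, map_one, Module.End.one_apply]
  | step i w hd ih => rw [isHecke_H.Tw_s_mul hd, cf_mul, ih, rep_T, opT_delta_of_not_descL _ hd]

theorem commute_opR_rep (j : Fin (n - 1)) (h : H F q n) :
    Commute (opR (q - q⁻¹) j) (rep q n h) := by
  induction h using H.induction with
  | hx i => rw [rep_X]; exact opR_mul_lmulV _ _ _
  | hx' i => rw [rep_Xinv]; exact opR_mul_lmulV _ _ _
  | hc i => rw [rep_C]; exact opR_mul_lmulV _ _ _
  | ht i => rw [rep_T]; exact commute_opR_opT _ _ _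
  | halg r => rw [AlgHom.commutes]; exact Algebra.commute_algebraMap_right _ _
  | hadd a b ha hb => rw [map_add]; exact ha.add_right hb
  | hmul a b ha hb => rw [map_mul]; exact ha.mul_right hb

theorem cf_mul_T (h : H F q n) (j : Fin (n - 1)) :
    cf q n (h * T F q j) = opR (q - q⁻¹) j (cf q n h) := by
  have h1 : cf q n (T F q j) = opR (q - q⁻¹) j (delta F 1) := by
    rw [cf_apply, rep_T, opT_delta_of_not_descL _ (not_descL_one j),
      opR_delta_of_not_descL _ (by rw [inv_one]; exact not_descL_one j), mul_one, one_mul]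
  rw [cf_mul, h1, cf_apply, ← Module.End.mul_apply, ← Module.End.mul_apply,
    (commute_opR_rep j h).eq]

theorem Tw_mul_T (w : Equiv.Perm (Fin n)) (j : Fin (n - 1)) :
    Tw (T F q) w * T F q j =
      Tw (T F q) (w * s j) + if DescL j w⁻¹ then (q - q⁻¹) • Tw (T F q) w else 0 := by
  have e : ∀ u, (delta F w (u * s j) : PA F n) = delta F (w * s j) u := by
    intro u
    rw [delta_apply, delta_apply]
    have : u * s j = w ↔ u = w * s j :=
      ⟨fun h => by rw [← h, mul_s_mul_s], fun h => by rw [h, mul_s_mul_s]⟩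
    simp only [this]
  have key : opR (q - q⁻¹) j (delta F w) =
      delta F (w * s j) + if DescL j w⁻¹ then (q - q⁻¹) • delta F w else 0 := by
    funext u
    rw [opR_apply, e, Pi.add_apply]
    by_cases huw : u = w
    · rw [huw]; split_ifs <;> rfl
    · have : delta F w u = 0 := by rw [delta_apply, if_neg huw]
      rw [this, smul_zero, ite_self]
      split_ifs
      · rw [Pi.smul_apply, this, smul_zero]
      · rfl
  rw [← theta_cf (Tw (T F q) w * T F q j), cf_mul_T, cf_Tw, key, map_add, theta_delta]
  split_ifs
  · rw [map_smul, theta_delta]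
  · rw [map_zero]

end Regular

section Frobenius

variable {F : Type} [Field F] {q : F} {n : ℕ}

theorem cf_theta (v : V F n) : cf q n (theta (iA q n) (T F q) v) = v := by
  rw [theta_apply, map_sum]
  simp only [cf_mul, cf_Tw, rep_iA]
  exact sum_lmulV_delta v

theorem theta_opR (v : V F n) (j : Fin (n - 1)) :
    theta (iA q n) (T F q) (opR (q - q⁻¹) j v) = theta (iA q n) (T F q) v * T F q j := by
  conv_lhs => rw [← cf_theta (q := q) v]
  rw [← cf_mul_T, theta_cf]

theorem len_mul_le (u w : Equiv.Perm (Fin n)) : len (u * w) ≤ len u + len w := by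
  induction u using perm_induction_left with
  | one => rw [one_mul]; omega
  | step i u hd ih =>
    rw [mul_assoc, len_s_mul_of_not_descL hd]
    have := len_s_mul_le i (u * w)
    omega

/-- The top coefficients of `T_u a T_w`. -/
theorem rep_Tw_lmulV_delta (u w x : Equiv.Perm (Fin n)) (a : PA F n)
    (hlen : len u + len w ≤ len x) :
    rep q n (Tw (T F q) u) (lmulV a (delta F w)) x = if x = u * w then pperm u a else 0 := by
  induction u using perm_induction_left generalizing x with
  | one =>
    rw [Tw_one, map_one, Module.End.one_apply, lmulV_apply, delta_apply, one_mul, pperm_one]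
    split_ifs
    · rw [mul_one]
    · rw [mul_zero]
  | step i u hd ih =>
    rw [len_s_mul_of_not_descL hd] at hlen
    have h1 := len_s_mul_le i (s i * x)
    rw [s_mul_s_mul] at h1
    have hx : x ≠ u * w := by
      rintro rfl
      have := len_mul_le u w
      omega
    have e : s i * x = u * w ↔ x = s i * u * w :=
      ⟨fun h => by rw [mul_assoc, ← h, s_mul_s_mul], fun h => by rw [h, mul_assoc, s_mul_s_mul]⟩
    rw [isHecke_H.Tw_s_mul hd, map_mul, Module.End.mul_apply, rep_T, opT_apply,
      ih x (by omega), ih (s i * x) (by omega), if_neg hx, map_zero, map_zero, smul_zero, ite_self,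
      zero_add, add_zero]
    simp only [e]
    split_ifs
    · rw [pperm_mul]
    · rw [map_zero]

open Classical in
/-- Restriction of a vector to the coset `S_μ d`, moved to `S_μ`. -/
noncomputable def trunc (μ : List ℕ) (d : Equiv.Perm (Fin n)) : V F n →ₗ[F] V F n where
  toFun v u := if InYoung μ u then v (u * d) else 0
  map_add' v v' := by
    funext u
    simp only [Pi.add_apply]
    split_ifs
    · rfl
    · rw [add_zero]
  map_smul' c v := by
    funext u
    simp only [Pi.smul_apply, RingHom.id_apply]
    split_ifs
    · rfl
    · rw [smul_zero]

variable {μ ν : List ℕ} {d : Equiv.Perm (Fin n)}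

theorem trunc_apply_of_mem (v : V F n) {u : Equiv.Perm (Fin n)} (hu : InYoung μ u) :
    trunc μ d v u = v (u * d) := if_pos hu

theorem trunc_apply_of_notMem (v : V F n) {u : Equiv.Perm (Fin n)} (hu : ¬InYoung μ u) :
    trunc μ d v u = 0 := if_neg hu

theorem trunc_lmulV (a : PA F n) (v : V F n) :
    trunc μ d (lmulV a v) = lmulV a (trunc μ d v) := by
  funext u
  rw [lmulV_apply]
  by_cases hu : InYoung μ u
  · rw [trunc_apply_of_mem _ hu, trunc_apply_of_mem _ hu, lmulV_apply]
  · rw [trunc_apply_of_notMem _ hu, trunc_apply_of_notMem _ hu, mul_zero]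

theorem InYoung.s_mul_iff {i : Fin (n - 1)} (hi : InYoung μ (s i)) {u : Equiv.Perm (Fin n)} :
    InYoung μ (s i * u) ↔ InYoung μ u :=
  ⟨fun h => by simpa using hi.mul h, fun h => hi.mul h⟩

theorem InYoung.mul_s_iff {i : Fin (n - 1)} (hi : InYoung μ (s i)) {u : Equiv.Perm (Fin n)} :
    InYoung μ (u * s i) ↔ InYoung μ u :=
  ⟨fun h => by simpa using h.mul hi, fun h => h.mul hi⟩

theorem IsBlockReversal.descL_mul_iff (hd : IsBlockReversal μ ν d) {u : Equiv.Perm (Fin n)}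
    (hu : InYoung μ u) {i : Fin (n - 1)} (hi : InYoung μ (s i)) :
    DescL i (u * d) ↔ DescL i u := by
  have hs := (inYoung_s_iff μ i).mp hi
  have hb : blk μ (u⁻¹ (lo i)).val = blk μ (u⁻¹ (HC.hi i)).val := by rw [hu.inv, hu.inv, hs]
  rw [DescL, DescL, mul_inv_rev, Equiv.Perm.mul_apply, Equiv.Perm.mul_apply]
  constructor
  · intro h
    by_contra hc
    rcases (not_lt.mp hc).lt_or_eq with h' | h'
    · exact lt_asymm h (hd.minL _ _ h' hb)
    · exact lo_ne_hi i (u⁻¹.injective h')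
  · exact fun h => hd.minL _ _ h hb.symm

theorem trunc_opT (hd : IsBlockReversal μ ν d) (ξ : F) {i : Fin (n - 1)} (hi : InYoung μ (s i))
    (v : V F n) : trunc μ d (opT ξ i v) = opT ξ i (trunc μ d v) := by
  funext u
  rw [opT_apply]
  by_cases hu : InYoung μ u
  · rw [trunc_apply_of_mem _ hu, trunc_apply_of_mem _ hu,
      trunc_apply_of_mem _ (hi.s_mul_iff.2 hu), opT_apply, mul_assoc]
    simp only [hd.descL_mul_iff hu hi]
  · rw [trunc_apply_of_notMem _ hu, trunc_apply_of_notMem _ hu,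
      trunc_apply_of_notMem _ (fun h => hu (hi.s_mul_iff.1 h)), map_zero, map_zero, smul_zero,
      ite_self, add_zero, add_zero]

theorem mul_s_eq_s_mul {i j : Fin (n - 1)} (h1 : d (lo j) = lo i) (h2 : d (hi j) = hi i) :
    d * s j = s i * d := by
  rw [s, s, ← h1, ← h2, Equiv.swap_apply_apply, inv_mul_cancel_right]

theorem trunc_opR (ξ : F) {i j : Fin (n - 1)} (hi' : InYoung μ (s i))
    (h1 : d (lo j) = lo i) (h2 : d (hi j) = hi i) (v : V F n) :
    trunc μ d (opR ξ j v) = opR ξ i (trunc μ d v) := by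
  funext u
  rw [opR_apply]
  by_cases hu : InYoung μ u
  · have e : DescL j (u * d)⁻¹ ↔ DescL i u⁻¹ := by
      rw [DescL, DescL, inv_inv, inv_inv, Equiv.Perm.mul_apply, Equiv.Perm.mul_apply, h1, h2]
    rw [trunc_apply_of_mem _ hu, trunc_apply_of_mem _ hu,
      trunc_apply_of_mem _ (hi'.mul_s_iff.2 hu), opR_apply, mul_assoc, mul_s_eq_s_mul h1 h2,
      ← mul_assoc]
    simp only [e]
  · rw [trunc_apply_of_notMem _ hu, trunc_apply_of_notMem _ hu,
      trunc_apply_of_notMem _ (fun h => hu (hi'.mul_s_iff.1 h)), smul_zero,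
      ite_self, add_zero]

/-- The projection `H_n → H_μ` onto the coefficients of the coset `S_μ d`. -/
noncomputable def frob (q : F) (μ : List ℕ) (d : Equiv.Perm (Fin n)) : H F q n →ₗ[F] H F q n :=
  theta (iA q n) (T F q) ∘ₗ trunc μ d ∘ₗ cf q n

theorem frob_apply (h : H F q n) :
    frob q μ d h = theta (iA q n) (T F q) (trunc μ d (cf q n h)) := rfl

theorem X_mem_parabolicC (μ : List ℕ) (i : Fin n) : X F q i ∈ parabolicC F q (n := n) μ :=
  Algebra.subset_adjoin (Or.inl (Or.inl (Or.inl ⟨i, rfl⟩)))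

theorem Xinv_mem_parabolicC (μ : List ℕ) (i : Fin n) : Xinv F q i ∈ parabolicC F q (n := n) μ :=
  Algebra.subset_adjoin (Or.inl (Or.inl (Or.inr ⟨i, rfl⟩)))

theorem C_mem_parabolicC (μ : List ℕ) (i : Fin n) : C F q i ∈ parabolicC F q (n := n) μ :=
  Algebra.subset_adjoin (Or.inl (Or.inr ⟨i, rfl⟩))

theorem T_mem_parabolicC {i : Fin (n - 1)} (hi : InYoung μ (s i)) :
    T F q i ∈ parabolicC F q (n := n) μ :=
  Algebra.subset_adjoin (Or.inr ⟨i, hi, rfl⟩)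

theorem iA_mem_parabolicC (μ : List ℕ) (a : PA F n) : iA q n a ∈ parabolicC F q (n := n) μ := by
  induction a using PA.induction with
  | hx i => rw [iA_px]; exact X_mem_parabolicC μ i
  | hc i => rw [iA_pc]; exact C_mem_parabolicC μ i
  | halg r => rw [AlgHom.commutes]; exact Subalgebra.algebraMap_mem _ r
  | hadd a b ha hb => rw [map_add]; exact add_mem ha hb
  | hmul a b ha hb => rw [map_mul]; exact mul_mem ha hb

theorem Tw_mem_parabolicC {u : Equiv.Perm (Fin n)} (hu : InYoung μ u) :
    Tw (T F q) u ∈ parabolicC F q (n := n) μ := by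
  induction hk : len u using Nat.strong_induction_on generalizing u with
  | _ k ih =>
    by_cases h1 : u = 1
    · rw [h1, Tw_one]; exact one_mem _
    · obtain ⟨i, hi⟩ := exists_descL h1
      have hs := hu.s_of_descL hi
      have hl := len_s_mul_of_descL hi
      rw [isHecke_H.Tw_of_descL hi]
      exact mul_mem (T_mem_parabolicC hs) (ih _ (by omega) (hs.s_mul_iff.2 hu) rfl)

theorem frob_mem (h : H F q n) : frob q μ d h ∈ parabolicC F q (n := n) μ := by
  rw [frob_apply, theta_apply]
  refine sum_mem fun u _ => ?_
  by_cases hu : InYoung μ u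
  · exact mul_mem (iA_mem_parabolicC μ _) (Tw_mem_parabolicC hu)
  · rw [trunc_apply_of_notMem _ hu, map_zero, zero_mul]
    exact zero_mem _

theorem frob_iA_mul (a : PA F n) (h : H F q n) :
    frob q μ d (iA q n a * h) = iA q n a * frob q μ d h := by
  rw [frob_apply, frob_apply, cf_mul, rep_iA, trunc_lmulV, theta_lmulV]

theorem frob_T_mul (hd : IsBlockReversal μ ν d) {i : Fin (n - 1)} (hi : InYoung μ (s i))
    (h : H F q n) : frob q μ d (T F q i * h) = T F q i * frob q μ d h := by
  rw [frob_apply, frob_apply, cf_mul, rep_T, trunc_opT hd _ hi, isHecke_H.theta_opT]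

theorem parabolicC_induction {μ : List ℕ} {p : H F q n → Prop}
    (ha : ∀ a, p (iA q n a)) (ht : ∀ i, InYoung μ (s i) → p (T F q i))
    (hadd : ∀ a b, p a → p b → p (a + b)) (hmul : ∀ a b, p a → p b → p (a * b)) {b : H F q n}
    (hb : b ∈ parabolicC F q (n := n) μ) : p b := by
  refine Algebra.adjoin_induction (p := fun b _ => p b) ?_ (fun r => ?_)
    (fun a b _ _ => hadd a b) (fun a b _ _ => hmul a b) hb
  · rintro _ (((⟨i, rfl⟩ | ⟨i, rfl⟩) | ⟨i, rfl⟩) | ⟨i, hi, rfl⟩)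
    · simpa using ha (px F i)
    · simpa using ha (px' F i)
    · simpa using ha (pc F i)
    · exact ht i hi
  · exact (iA q n).commutes r ▸ ha _

theorem frob_mul (hd : IsBlockReversal μ ν d) {b : H F q n}
    (hb : b ∈ parabolicC F q (n := n) μ) (h : H F q n) :
    frob q μ d (b * h) = b * frob q μ d h := by
  refine parabolicC_induction (p := fun b => ∀ h, frob q μ d (b * h) = b * frob q μ d h)
    frob_iA_mul (fun i hi => frob_T_mul hd hi) (fun a b ha hb h => ?_) (fun a b ha hb h => ?_) hb h
  · rw [add_mul, map_add, ha, hb, add_mul]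
  · rw [mul_assoc, ha, hb, mul_assoc]

theorem frob_mul_T {i j : Fin (n - 1)} (hi' : InYoung μ (s i)) (h1 : d (lo j) = lo i)
    (h2 : d (hi j) = hi i) (h : H F q n) :
    frob q μ d (h * T F q j) = frob q μ d h * T F q i := by
  rw [frob_apply, frob_apply, cf_mul_T, trunc_opR _ hi' h1 h2, theta_opR]

theorem frob_Tw_mul (hd : IsBlockReversal μ ν d) {x y : Equiv.Perm (Fin n)} (a : PA F n)
    (hlen : len x + len y ≤ len d) (hxy : ∀ u, InYoung μ u → u * d = x * y → u = 1) :
    frob q μ d (Tw (T F q) x * (iA q n a * Tw (T F q) y)) =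
      if d = x * y then iA q n (pperm x a) else 0 := by
  have key : trunc μ d (cf q n (Tw (T F q) x * (iA q n a * Tw (T F q) y))) =
      lmulV (if d = x * y then pperm x a else 0) (delta F 1) := by
    funext u
    rw [lmulV_apply, delta_apply, cf_mul, cf_mul, cf_Tw, rep_iA]
    by_cases hu : InYoung μ u
    · rw [trunc_apply_of_mem _ hu,
        rep_Tw_lmulV_delta _ _ _ _ (hlen.trans (len_le_len_mul hd.invs_eq hu))]
      by_cases h1 : u = 1
      · rw [h1, one_mul, if_pos rfl, mul_one]
      · rw [if_neg fun h => h1 (hxy u hu h), if_neg h1, mul_zero]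
    · have h1 : u ≠ 1 := fun h => hu (h ▸ InYoung.one μ)
      rw [trunc_apply_of_notMem _ hu, if_neg h1, mul_zero]
  rw [frob_apply, key, theta_lmulV, theta_delta, Tw_one, mul_one]
  split_ifs
  · rfl
  · rw [map_zero]

theorem frob_Tw_mul_iA (hd : IsBlockReversal μ ν d) (w : Equiv.Perm (Fin n)) (a : PA F n) :
    frob q μ d (Tw (T F q) w * iA q n a) =
      frob q μ d (Tw (T F q) w) * iA q n (pperm d a) := by
  induction w using perm_induction_minL (μ := μ) with
  | base w hw =>
    have hlen : len w + len (1 : Equiv.Perm (Fin n)) ≤ len d := by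
      rw [len_one]; exact hd.len_le hw
    have hxy : ∀ u, InYoung μ u → u * d = w * 1 → u = 1 := fun u hu h =>
      MinL.eq_one hu hd.minL (by rw [h, mul_one]; exact hw)
    have e1 := frob_Tw_mul (q := q) hd a hlen hxy
    have e2 := frob_Tw_mul (q := q) hd 1 hlen hxy
    simp only [Tw_one, map_one, mul_one] at e1 e2
    rw [e1, e2]
    split_ifs with h
    · rw [one_mul, h]
    · rw [zero_mul]
  | step i w hi hd' ih => rw [isHecke_H.Tw_s_mul hd', mul_assoc, frob_T_mul hd hi, ih,
      frob_T_mul hd hi, mul_assoc]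

theorem frob_mul_iA (hd : IsBlockReversal μ ν d) (h : H F q n) (a : PA F n) :
    frob q μ d (h * iA q n a) = frob q μ d h * iA q n (pperm d a) := by
  rw [← theta_cf h, theta_apply, Finset.sum_mul, map_sum, map_sum, Finset.sum_mul]
  refine Finset.sum_congr rfl fun w _ => ?_
  rw [mul_assoc, frob_iA_mul, frob_iA_mul, frob_Tw_mul_iA hd, mul_assoc]

theorem frob_Tw_mul_Tw [DecidableEq (Equiv.Perm (Fin n))] (hd : IsBlockReversal μ ν d)
    {x y : Equiv.Perm (Fin n)} (hx : MinL μ x)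
    (hy : MinL μ y) (hlen : len x ≤ len y) :
    frob q μ d (Tw (T F q) x * Tw (T F q) (y⁻¹ * d)) = if x = y then 1 else 0 := by
  have hl := hd.len_add_len hy
  have e := frob_Tw_mul (q := q) hd 1 (x := x) (y := y⁻¹ * d) (by omega) (fun u hu h => by
    rw [← mul_assoc] at h
    have h' := mul_right_cancel h
    refine MinL.eq_one hu hy ?_
    rwa [h', inv_mul_cancel_right])
  rw [map_one, one_mul, map_one, map_one] at e
  rw [e]
  have : d = x * (y⁻¹ * d) ↔ x = y := by
    rw [← mul_assoc, right_eq_mul, mul_inv_eq_one]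
  simp only [this]

end Frobenius

section Coinduction

variable {F : Type} [Field F] {q : F} {n : ℕ} {μ ν : List ℕ} {d : Equiv.Perm (Fin n)}
  {M : Type} [AddCommGroup M] [Module F M]

/-- An endomorphism of `I → M` that is unitriangular for a degree function on `I` is bijective. -/
theorem bijective_of_unitriangular {I : Type} [Finite I] (deg : I → ℕ)
    (c : Module.End F (I → M))
    (hc : ∀ m x, (∀ y, deg y < deg x → m y = 0) → c m x = m x) : Function.Bijective c := by
  have key : ∀ k m x, deg x < k → ((c - 1) ^ k) m x = 0 := by
    intro k
    induction k with
    | zero => exact fun _ _ h => absurd h (Nat.not_lt_zero _)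
    | succ k ih =>
      intro m x hx
      rw [pow_succ', Module.End.mul_apply, LinearMap.sub_apply, Module.End.one_apply, Pi.sub_apply,
        hc _ x fun y hy => ih m y (by omega), sub_self]
  have := Fintype.ofFinite I
  have hnil : IsNilpotent (c - 1) :=
    ⟨Finset.univ.sup deg + 1, LinearMap.ext fun m => funext fun x =>
      key _ m x (Nat.lt_succ_of_le (Finset.le_sup (Finset.mem_univ x)))⟩
  have hu := hnil.isUnit_one_add
  rw [add_sub_cancel] at hu
  exact (Module.End.isUnit_iff c).mp hu

/-- Every element of `H_n` is a combination of the products `T_w a` with `a` in the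
polynomial-Clifford subalgebra. -/
theorem mem_span_Tw_mul_iA (h : H F q n) :
    h ∈ Submodule.span F (Set.range fun p : Equiv.Perm (Fin n) × PA F n =>
      Tw (T F q) p.1 * iA q n p.2) := by
  set S := Submodule.span F (Set.range fun p : Equiv.Perm (Fin n) × PA F n =>
      Tw (T F q) p.1 * iA q n p.2) with hS
  have hT : ∀ i, ∀ z ∈ S, T F q i * z ∈ S := by
    intro i z hz
    induction hz using Submodule.span_induction with
    | mem z hz =>
      obtain ⟨⟨w, a⟩, rfl⟩ := hz
      have hmem : ∀ v, Tw (T F q) v * iA q n a ∈ S := fun v =>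
        Submodule.subset_span ⟨(v, a), rfl⟩
      rw [← mul_assoc, isHecke_H.t_mul_Tw, add_mul]
      refine add_mem (hmem _) ?_
      split_ifs
      · rw [smul_mul_assoc]; exact S.smul_mem _ (hmem _)
      · rw [zero_mul]; exact zero_mem _
    | zero => rw [mul_zero]; exact zero_mem _
    | add a b _ _ ha hb => rw [mul_add]; exact add_mem ha hb
    | smul r a _ ha => rw [mul_smul_comm]; exact S.smul_mem _ ha
  have hA : ∀ w a, iA q n a * Tw (T F q) w ∈ S := by
    intro w
    induction w using perm_induction_left with
    | one =>
      intro a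
      refine Submodule.subset_span ⟨(1, a), ?_⟩
      simp only [Tw_one, one_mul, mul_one]
    | step i w hd ih =>
      intro a
      have e := isHecke_H (q := q) |>.twists i (pperm (s i) a)
      rw [← pperm_mul, s_mul_self, pperm_one] at e
      rw [isHecke_H.Tw_s_mul hd, ← mul_assoc, eq_sub_of_add_eq e.symm, sub_mul, mul_assoc]
      exact sub_mem (hT _ _ (ih _)) (ih _)
  rw [← theta_cf h, theta_apply]
  exact sum_mem fun w _ => hA w _

/-- The right translation action of `H_n` on a coinduced module. -/
noncomputable def coindAct (B : Subalgebra F (H F q n)) (ρ : ↥B →ₐ[F] Module.End F M) :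
    H F q n →ₐ[F] Module.End F ↥(coindPar F q B ρ) where
  toFun h :=
    { toFun := fun ψ => ⟨ψ.val ∘ₗ LinearMap.mulRight F h, fun b x => by
        simp only [LinearMap.comp_apply, LinearMap.mulRight_apply, mul_assoc]
        exact ψ.2 b (x * h)⟩
      map_add' := fun _ _ => rfl
      map_smul' := fun _ _ => rfl }
  map_one' := by
    ext ψ x
    exact congrArg ψ.val (mul_one x)
  map_mul' a b := by
    ext ψ x
    exact congrArg ψ.val (mul_assoc x a b).symm
  map_zero' := by
    ext ψ x
    simp
  map_add' a b := by
    ext ψ x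
    simp [mul_add]
  commutes' r := by
    ext ψ x
    simp [← Algebra.commutes, ← Algebra.smul_def]

theorem coindAct_apply (B : Subalgebra F (H F q n)) (ρ : ↥B →ₐ[F] Module.End F M)
    (h : H F q n) (ψ : ↥(coindPar F q B ρ)) (x : H F q n) :
    (coindAct B ρ h ψ).val x = ψ.val (x * h) := rfl

/-- The action of `frob h` on an `H_μ`-module. -/
noncomputable def frobAct (d : Equiv.Perm (Fin n))
    (ρ' : ↥(parabolicC F q (n := n) μ) →ₐ[F] Module.End F M) : H F q n →ₗ[F] Module.End F M :=
  ρ'.toLinearMap ∘ₗ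
    (frob q μ d).codRestrict (Subalgebra.toSubmodule (parabolicC F q (n := n) μ)) frob_mem

variable {ρν : ↥(parabolicC F q (n := n) ν) →ₐ[F] Module.End F M}
  {ρ' : ↥(parabolicC F q (n := n) μ) →ₐ[F] Module.End F M}

theorem frobAct_apply (h : H F q n) : frobAct d ρ' h = ρ' ⟨frob q μ d h, frob_mem h⟩ := rfl

theorem frobAct_mul (hd : IsBlockReversal μ ν d) (b : ↥(parabolicC F q (n := n) μ))
    (h : H F q n) : frobAct d ρ' (b.val * h) = ρ' b * frobAct d ρ' h := by
  rw [frobAct_apply, frobAct_apply, ← map_mul]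
  exact congrArg ρ' (Subtype.ext (frob_mul hd b.2 h))

theorem frobAct_mul_of_eq {h c b : H F q n} (hb : b ∈ parabolicC F q (n := n) μ)
    (e : frob q μ d (h * c) = frob q μ d h * b) :
    frobAct d ρ' (h * c) = frobAct d ρ' h * ρ' ⟨b, hb⟩ := by
  rw [frobAct_apply, frobAct_apply, ← map_mul]
  exact congrArg ρ' (Subtype.ext e)

theorem frobAct_mul_right (hd : IsBlockReversal μ ν d)
    (hρ' : IsTwistedRep F q ν d (parabolicC F q (n := n) μ) ρν ρ')
    (c : ↥(parabolicC F q (n := n) ν)) (h : H F q n) :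
    frobAct d ρ' (h * c.val) = frobAct d ρ' h * ρν c := by
  obtain ⟨hX, hX', hC, hT⟩ := hρ'
  obtain ⟨c, hc⟩ := c
  change frobAct d ρ' (h * c) = _
  induction hc using Algebra.adjoin_induction generalizing h with
  | mem c hc =>
    rcases hc with ((⟨i, rfl⟩ | ⟨i, rfl⟩) | ⟨i, rfl⟩) | ⟨j, hj, rfl⟩
    · have e := frob_mul_iA hd h (px F i)
      rw [iA_px, pperm_px, iA_px] at e
      rw [frobAct_mul_of_eq (X_mem_parabolicC μ _) e]
      exact congrArg _ (hX (d i) _ _ rfl (by simp))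
    · have e := frob_mul_iA hd h (px' F i)
      rw [iA_px', pperm_px', iA_px'] at e
      rw [frobAct_mul_of_eq (Xinv_mem_parabolicC μ _) e]
      exact congrArg _ (hX' (d i) _ _ rfl (by simp))
    · have e := frob_mul_iA hd h (pc F i)
      rw [iA_pc, pperm_pc, iA_pc] at e
      rw [frobAct_mul_of_eq (C_mem_parabolicC μ _) e]
      exact congrArg _ (hC (d i) _ _ rfl (by simp))
    · obtain ⟨i, hi, h1, h2⟩ := hd.exists_conj hj
      rw [frobAct_mul_of_eq (T_mem_parabolicC hi) (frob_mul_T hi h1 h2 h)]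
      exact congrArg _ (hT i j _ _ (by simp [← h1]) rfl rfl)
  | algebraMap r =>
    have : (⟨algebraMap F _ r, Subalgebra.algebraMap_mem _ r⟩ : ↥(parabolicC F q (n := n) ν)) =
      algebraMap F _ r := rfl
    erw [this, AlgHom.commutes]
    rw [← Algebra.commutes, ← Algebra.commutes, ← Algebra.smul_def, ← Algebra.smul_def, map_smul]
  | add a b ha hb iha ihb =>
    rw [mul_add, map_add, iha, ihb, ← mul_add, ← map_add]
    rfl
  | mul a b ha hb iha ihb =>
    rw [← mul_assoc, ihb, iha, mul_assoc, ← map_mul]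
    rfl

end Coinduction

section Comparison

variable {F : Type} [Field F] {q : F} {n : ℕ} {μ ν : List ℕ} {d : Equiv.Perm (Fin n)}
  {M : Type} [AddCommGroup M] [Module F M]
  {ρν : ↥(parabolicC F q (n := n) ν) →ₐ[F] Module.End F M}
  {ρ' : ↥(parabolicC F q (n := n) μ) →ₐ[F] Module.End F M}
  {E : Type} [AddCommGroup E] [Module F E] {ρE : H F q n →ₐ[F] Module.End F E} {ι : M →ₗ[F] E}

/-- An induced module is generated by the image of the module it is induced from. -/
theorem IsInducedAlong.eq_top {A B : Type} [Ring A] [Ring B] [Algebra F A] [Algebra F B]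
    {φ : B →ₐ[F] A} {ρ : B →ₐ[F] Module.End F M} {ρE : A →ₐ[F] Module.End F E}
    (hInd : IsInducedAlong F φ ρ ρE ι) (N : Submodule F E)
    (hN : ∀ a, ∀ e ∈ N, ρE a e ∈ N) (hι : ∀ m, ι m ∈ N) : N = ⊤ := by
  let ρQ : A →ₐ[F] Module.End F (E ⧸ N) :=
    { toFun := fun a => N.mapQ N (ρE a) (hN a)
      map_one' := by ext e; simp
      map_mul' := fun a b => by ext e; simp
      map_zero' := by ext e; simp
      map_add' := fun a b => by ext e; simp
      commutes' := fun r => by ext e; simp [Module.algebraMap_end_apply] }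
  have h := (hInd.2 (E ⧸ N) ρQ 0 fun b m => by simp).unique
    (y₁ := N.mkQ) (y₂ := 0) ⟨fun x e => rfl, fun m => by simpa using hι m⟩
    ⟨fun x e => by simp, fun m => rfl⟩
  rw [← N.ker_mkQ, h, LinearMap.ker_zero]

open Classical in
/-- The map `(m_x)_x ↦ ∑ T_{x⁻¹ d} ⊗ m_x` to the induced module. -/
noncomputable def indSum (μ : List ℕ) (d : Equiv.Perm (Fin n))
    (ρE : H F q n →ₐ[F] Module.End F E) (ι : M →ₗ[F] E) :
    ({x : Equiv.Perm (Fin n) // MinL μ x} → M) →ₗ[F] E :=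
  ∑ x, ρE (Tw (T F q) (x.val⁻¹ * d)) ∘ₗ ι ∘ₗ LinearMap.proj x

open Classical in
theorem indSum_apply (m : {x : Equiv.Perm (Fin n) // MinL μ x} → M) :
    indSum μ d ρE ι m = ∑ x, ρE (Tw (T F q) (x.val⁻¹ * d)) (ι (m x)) := by
  simp [indSum]

theorem indSum_surjective (hd : IsBlockReversal μ ν d)
    (hInd : IsInducedAlong F (A := H F q n) (B := ↥(parabolicC F q (n := n) ν))
      (parabolicC F q (n := n) ν).val ρν ρE ι) :
    Function.Surjective (indSum μ d ρE ι) := by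
  have hb : ∀ (z c : H F q n) (hc : c ∈ parabolicC F q (n := n) ν) (m : M),
      ρE (z * c) (ι m) = ρE z (ι (ρν ⟨c, hc⟩ m)) := fun z c hc m => by
    rw [hInd.1, map_mul]
    rfl
  have hTw : ∀ v m, ρE (Tw (T F q) v⁻¹) (ι m) ∈ LinearMap.range (indSum μ d ρE ι) := by
    intro v
    induction v using perm_induction_minL (μ := ν) with
    | base v hv =>
      intro m
      have hx : MinL μ (d * v) := by simpa using hd.minL_mul_inv (w := v⁻¹) (by simpa using hv)
      classical
      refine ⟨Pi.single ⟨d * v, hx⟩ m, ?_⟩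
      rw [indSum_apply, Finset.sum_eq_single ⟨d * v, hx⟩]
      · simp
      · intro y _ hy
        rw [Pi.single_eq_of_ne hy, map_zero, map_zero]
      · exact fun h => absurd (Finset.mem_univ _) h
    | step i v hi hv ih =>
      intro m
      have e := Tw_mul_T (q := q) v⁻¹ i
      rw [inv_inv, if_neg hv, add_zero] at e
      rw [mul_inv_rev, s_inv, ← e, hb _ _ (T_mem_parabolicC hi)]
      exact ih _
  have hH : ∀ h m, ρE h (ι m) ∈ LinearMap.range (indSum μ d ρE ι) := by
    intro h m
    induction mem_span_Tw_mul_iA h using Submodule.span_induction with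
    | mem z hz =>
      obtain ⟨⟨w, a⟩, rfl⟩ := hz
      rw [hb _ _ (iA_mem_parabolicC ν a), ← inv_inv w]
      exact hTw _ _
    | zero => rw [map_zero]; exact zero_mem _
    | add a b _ _ ha hb => rw [map_add]; exact add_mem ha hb
    | smul r a _ ha => rw [map_smul]; exact Submodule.smul_mem _ _ ha
  rw [← LinearMap.range_eq_top]
  refine hInd.eq_top _ ?_ fun m => by simpa using hH 1 m
  rintro h _ ⟨m, rfl⟩
  rw [indSum_apply, map_sum]
  refine sum_mem fun x _ => ?_
  rw [← Module.End.mul_apply, ← map_mul]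
  exact hH _ _

/-- Evaluation of an element of the coinduced module at the `T_x`. -/
noncomputable def coindEval (ρ' : ↥(parabolicC F q (n := n) μ) →ₐ[F] Module.End F M) :
    ↥(coindPar F q (parabolicC F q (n := n) μ) ρ') →ₗ[F]
      ({x : Equiv.Perm (Fin n) // MinL μ x} → M) where
  toFun ψ x := ψ.val (Tw (T F q) x.val)
  map_add' _ _ := rfl
  map_smul' _ _ := rfl

theorem coindEval_injective : Function.Injective (coindEval ρ') := by
  rw [injective_iff_map_eq_zero]
  intro ψ hψ
  have hTw : ∀ w, ψ.val (Tw (T F q) w) = 0 := by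
    intro w
    induction w using perm_induction_minL (μ := μ) with
    | base w hw => exact congrFun hψ ⟨w, hw⟩
    | step i w hi hw ih =>
      rw [isHecke_H.Tw_s_mul hw]
      exact (ψ.2 ⟨_, T_mem_parabolicC hi⟩ _).trans (by rw [ih, map_zero])
  refine Subtype.ext (LinearMap.ext fun h => ?_)
  rw [← theta_cf h, theta_apply, map_sum]
  exact Finset.sum_eq_zero fun w _ =>
    (ψ.2 ⟨_, iA_mem_parabolicC μ _⟩ _).trans (by rw [hTw, map_zero])

/-- The `H_ν`-equivariant map from `M` to the module coinduced from its twist. -/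
noncomputable def toCoind (hd : IsBlockReversal μ ν d)
    (ρ' : ↥(parabolicC F q (n := n) μ) →ₐ[F] Module.End F M) :
    M →ₗ[F] ↥(coindPar F q (parabolicC F q (n := n) μ) ρ') where
  toFun m := ⟨(frobAct d ρ').flip m, fun b x => by
    rw [LinearMap.flip_apply, LinearMap.flip_apply, frobAct_mul hd]
    rfl⟩
  map_add' m m' := Subtype.ext (map_add _ m m')
  map_smul' r m := Subtype.ext (map_smul _ r m)

theorem toCoind_apply (hd : IsBlockReversal μ ν d) (m : M) (y : H F q n) :
    (toCoind hd ρ' m).val y = frobAct d ρ' y m := rfl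

theorem toCoind_equivariant (hd : IsBlockReversal μ ν d)
    (hρ' : IsTwistedRep F q ν d (parabolicC F q (n := n) μ) ρν ρ')
    (c : ↥(parabolicC F q (n := n) ν)) (m : M) :
    toCoind hd ρ' (ρν c m) = coindAct _ ρ' c.val (toCoind hd ρ' m) := by
  refine Subtype.ext (LinearMap.ext fun y => ?_)
  rw [coindAct_apply, toCoind_apply, toCoind_apply, frobAct_mul_right hd hρ']
  rfl

theorem frobAct_Tw_mul_Tw (hd : IsBlockReversal μ ν d) {x y : Equiv.Perm (Fin n)}
    (hx : MinL μ x) (hy : MinL μ y) (hlen : len x ≤ len y) (m : M) [Decidable (x = y)] :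
    frobAct d ρ' (Tw (T F q) x * Tw (T F q) (y⁻¹ * d)) m = if x = y then m else 0 := by
  have e := frob_Tw_mul_Tw (q := q) hd hx hy hlen
  rw [frobAct_apply]
  split_ifs with h
  · rw [if_pos h] at e
    simp only [e]
    exact LinearMap.congr_fun (map_one ρ') m
  · rw [if_neg h] at e
    simp only [e]
    exact LinearMap.congr_fun (map_zero ρ') m

/-- An equivariant map from the induced to the coinduced module extending `toCoind` is
bijective. -/
theorem bijective_of_extends_toCoind (hd : IsBlockReversal μ ν d)
    (hInd : IsInducedAlong F (A := H F q n) (B := ↥(parabolicC F q (n := n) ν))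
      (parabolicC F q (n := n) ν).val ρν ρE ι)
    {Ψ : E →ₗ[F] ↥(coindPar F q (parabolicC F q (n := n) μ) ρ')}
    (hΨ : ∀ h e, Ψ (ρE h e) = coindAct _ ρ' h (Ψ e)) (hι : ∀ m, Ψ (ι m) = toCoind hd ρ' m) :
    Function.Bijective Ψ := by
  classical
  have hc : Function.Bijective (coindEval ρ' ∘ₗ Ψ ∘ₗ indSum μ d ρE ι) := by
    refine bijective_of_unitriangular (fun x => len x.val) _ fun m x hm => ?_
    have e : (coindEval ρ' ∘ₗ Ψ ∘ₗ indSum μ d ρE ι) m x =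
        ∑ y, frobAct d ρ' (Tw (T F q) x.val * Tw (T F q) (y.val⁻¹ * d)) (m y) := by
      rw [LinearMap.comp_apply, LinearMap.comp_apply, indSum_apply, map_sum, map_sum,
        Finset.sum_apply]
      refine Finset.sum_congr rfl fun y _ => ?_
      rw [hΨ, hι]
      rfl
    rw [e, Finset.sum_eq_single x]
    · rw [frobAct_Tw_mul_Tw hd x.2 x.2 le_rfl, if_pos rfl]
    · intro y _ hy
      by_cases hl : len y.val < len x.val
      · rw [hm y hl, map_zero]
      · rw [frobAct_Tw_mul_Tw hd x.2 y.2 (not_lt.mp hl), if_neg fun h => hy (Subtype.ext h.symm)]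
    · exact fun h => absurd (Finset.mem_univ _) h
  constructor
  · intro e e' h
    obtain ⟨m, rfl⟩ := indSum_surjective hd hInd e
    obtain ⟨m', rfl⟩ := indSum_surjective hd hInd e'
    exact congrArg _ (hc.1 (congrArg (coindEval ρ') h))
  · intro ψ
    obtain ⟨m, hm⟩ := hc.2 (coindEval ρ' ψ)
    exact ⟨_, coindEval_injective hm⟩

end Comparison

/-- **Induction is coinduction from the opposite parabolic** (Corollary `c1` of
Brundan–Kleshchev): let `μ` be a composition of `n`, `ν = μ*` the reversed
composition, and `d` the longest minimal double coset representative in `D_{μ,ν}`.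
Then for every `H_ν`-module `M` there is an isomorphism of `H_n`-modules
`Hom_{H_μ}(H_n, ᵈM) ≅ H_n ⊗_{H_ν} M`, where `ᵈM` is `M` viewed as an `H_μ`-module
via the isomorphism `φ_{d⁻¹} : H_μ → H_ν`. -/
theorem coinduced_iso_induced
    (F : Type) [Field F] [IsAlgClosed F] (h2 : (2 : F) ≠ 0)
    (q : F) (hq : GoodParam F q) (n : ℕ)
    (μ : List ℕ) (hμ : IsComposition μ n)
    (dd : Equiv.Perm (Fin n)) (hdmin : IsMinDC μ μ.reverse dd)
    (hdlong : ∀ x : Equiv.Perm (Fin n), IsMinDC μ μ.reverse x → len x ≤ len dd)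
    (M : Type) [AddCommGroup M] [Module F M]
    (ρν : ↥(parabolicC F q (n := n) μ.reverse) →ₐ[F] Module.End F M)
    (ρ' : ↥(parabolicC F q (n := n) μ) →ₐ[F] Module.End F M)
    (hρ' : IsTwistedRep F q μ.reverse dd (parabolicC F q (n := n) μ) ρν ρ')
    (E : Type) [AddCommGroup E] [Module F E]
    (ρE : H F q n →ₐ[F] Module.End F E) (ι : M →ₗ[F] E)
    (hInd : IsInducedAlong F (A := H F q n) (B := ↥(parabolicC F q (n := n) μ.reverse))
      (parabolicC F q (n := n) μ.reverse).val ρν ρE ι) :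
    ∃ Φ : ↥(coindPar F q (parabolicC F q (n := n) μ) ρ') ≃ₗ[F] E,
      ∀ (h : H F q n) (ψ ψ' : ↥(coindPar F q (parabolicC F q (n := n) μ) ρ')),
        (∀ y : H F q n, ψ'.val y = ψ.val (y * h)) → Φ ψ' = ρE h (Φ ψ) := by
  have hd := isBlockReversal_of_longest hμ.2 hdmin hdlong
  obtain ⟨Ψ, ⟨hΨ, hι⟩, -⟩ :=
    hInd.2 _ (coindAct _ ρ') (toCoind hd ρ') (toCoind_equivariant hd hρ')
  let e := LinearEquiv.ofBijective Ψ (bijective_of_extends_toCoind hd hInd hΨ hι)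
  refine ⟨e.symm, fun h ψ ψ' hψ => ?_⟩
  rw [LinearEquiv.symm_apply_eq]
  change ψ' = Ψ (ρE h (e.symm ψ))
  rw [hΨ]
  change ψ' = coindAct _ ρ' h (e (e.symm ψ))
  rw [LinearEquiv.apply_symm_apply]
  exact Subtype.ext (LinearMap.ext hψ)

end HC
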